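/- Let C be a regular, irreducible curve that is projective over a field k, with function field F = k(C), arithmetic genus t ≥ 1, and a k-rational point O; let S = { P in C : RR_{3t}((P)) ≠ {0} }, S_d = S ∩ C_d, S_{≥d} = S ∩ C_{≥d}, and, for 2t ≤ d ≤ 3t, let F_d' = L_{3t} + ⟨ {f_R, l} : R a closed point not in S with 2t+1 ≤ deg(R) ≤ d, l a nonzero element of RR_{3t} ⟩. Then for each d = 2t+1, …, 3t, the tame symbol induces isomorphisms F_d' / F_{d−1}' ≅ ∐_{P ∈ C_d \ S_d} k(P)^* and K₂(F) / F_{d−1}' ≅ ∐_{P ∈ C_{≥d} \ S_{≥d}} k(P)^*. -/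

import Mathlib

open scoped TensorProduct

noncomputable section

/-- The set of Steinberg relations in `Fˣ ⊗_ℤ Fˣ` (written additively):
the elements `a ⊗ b` with `a + b = 1` in `F`. -/
def SteinbergSet (F : Type*) [Field F] :
    Set (TensorProduct ℤ (Additive Fˣ) (Additive Fˣ)) :=
  { x | ∃ a b : Fˣ, (a : F) + (b : F) = 1 ∧
      x = Additive.ofMul a ⊗ₜ[ℤ] Additive.ofMul b }

/-- Milnor's `K₂` of a field, via Matsumoto's presentation. -/
abbrev K2 (F : Type*) [Field F] :=
  (TensorProduct ℤ (Additive Fˣ) (Additive Fˣ)) ⧸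
    Submodule.span ℤ (SteinbergSet F)

/-- The symbol `{f, g}` in `K₂(F)`. -/
def symbol {F : Type*} [Field F] (f g : Fˣ) : K2 F :=
  Submodule.Quotient.mk (Additive.ofMul f ⊗ₜ[ℤ] Additive.ofMul g)

/-- The degree of a divisor `D` on the curve: `∑_P deg(P) · D(P)`,
where `deg P = [k(P) : k]`. -/
def divDeg (k : Type*) [Field k] {Pt : Type*} (res : Pt → Type*)
    [∀ P, Field (res P)] [∀ P, Algebra k (res P)] (D : Pt →₀ ℤ) : ℤ :=
  ∑ᶠ P, (Module.finrank k (res P) : ℤ) * D P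

/-- Axioms for a regular, irreducible curve `C`, projective over a field `k`, with
`H⁰(C, O_C) = k`, presented through: its function field `F = k(C)`, its set `Pt` of
closed points, the residue fields `res P = k(P)`, the normalized valuations `ord P`,
the evaluation maps `ev P` (evaluation at `P` of functions regular at `P`), the
Riemann-Roch spaces `L D = H⁰(C, O_C(D))`, and the arithmetic genus
`t = dim_k H¹(C, O_C)`, characterized by the Riemann-Roch relations. -/
structure IsProjCurve (k F : Type*) [Field k] [Field F] [Algebra k F]
    {Pt : Type*} (res : Pt → Type*) [∀ P, Field (res P)] [∀ P, Algebra k (res P)]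
    (ord : Pt → F → ℤ) (ev : ∀ P, F → res P)
    (L : (Pt →₀ ℤ) → Submodule k F) (t : ℕ) : Prop where
  finiteDimensional_res : ∀ P, FiniteDimensional k (res P)
  ord_mul : ∀ P (f g : F), f ≠ 0 → g ≠ 0 → ord P (f * g) = ord P f + ord P g
  ord_add : ∀ P (f g : F), f ≠ 0 → g ≠ 0 → f + g ≠ 0 →
      min (ord P f) (ord P g) ≤ ord P (f + g)
  ord_algebraMap : ∀ P (c : k), c ≠ 0 → ord P (algebraMap k F c) = 0
  ord_uniformizer : ∀ P, ∃ f : F, f ≠ 0 ∧ ord P f = 1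
  ord_separates : ∀ P Q, (∀ f : F, ord P f = ord Q f) → P = Q
  support_finite : ∀ f : F, f ≠ 0 → {P | ord P f ≠ 0}.Finite
  degree_formula : ∀ f : F, f ≠ 0 →
      ∑ᶠ P, (Module.finrank k (res P) : ℤ) * ord P f = 0
  ev_zero : ∀ P, ev P 0 = 0
  ev_one : ∀ P, ev P 1 = 1
  ev_add : ∀ P (f g : F), f ≠ 0 → g ≠ 0 → 0 ≤ ord P f → 0 ≤ ord P g →
      ev P (f + g) = ev P f + ev P g
  ev_mul : ∀ P (f g : F), f ≠ 0 → g ≠ 0 → 0 ≤ ord P f → 0 ≤ ord P g →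
      ev P (f * g) = ev P f * ev P g
  ev_algebraMap : ∀ P (c : k), ev P (algebraMap k F c) = algebraMap k (res P) c
  ev_eq_zero_iff : ∀ P (f : F), f ≠ 0 → 0 ≤ ord P f → (ev P f = 0 ↔ 0 < ord P f)
  ev_surjective : ∀ P (y : res P), ∃ f : F, f ≠ 0 ∧ 0 ≤ ord P f ∧ ev P f = y
  mem_L : ∀ (D : Pt →₀ ℤ) (f : F), f ∈ L D ↔ (f ≠ 0 → ∀ P, 0 ≤ D P + ord P f)
  finiteDimensional_L : ∀ D, FiniteDimensional k (L D)
  global_sections : ∀ f : F, f ∈ L 0 ↔ ∃ c : k, algebraMap k F c = f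
  rr_ineq : ∀ D : Pt →₀ ℤ,
      divDeg k res D + 1 - t ≤ (Module.finrank k (L D) : ℤ)
  rr_eq : ∀ D : Pt →₀ ℤ, 2 * (t : ℤ) - 2 < divDeg k res D →
      (Module.finrank k (L D) : ℤ) = divDeg k res D + 1 - t

/-- `T` is the tame symbol `K₂(F) → ∐_{P} k(P)^*`: it is determined by
`T_P({f,g}) = (-1)^{ord_P(f)·ord_P(g)} (f^{ord_P(g)} / g^{ord_P(f)})(P)`. -/
def IsTameSymbol {F : Type*} [Field F] {Pt : Type*} {res : Pt → Type*}
    [∀ P, Field (res P)]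
    (ord : Pt → F → ℤ) (ev : ∀ P, F → res P)
    (T : K2 F →+ Π₀ P : Pt, Additive ((res P)ˣ)) : Prop :=
  ∀ (f g : Fˣ) (P : Pt),
    ((Additive.toMul (T (symbol f g) P) : (res P)ˣ) : res P) =
      ev P (((-1 : Fˣ) ^ (ord P (f : F) * ord P (g : F)) *
        f ^ (ord P (g : F)) * g ^ (-ord P (f : F)) : Fˣ) : F)

/-- `L_d`: the subgroup of `K₂(F)` generated by the symbols `{l, m}` with `l, m`
nonzero elements of the Riemann-Roch space `H⁰(C, O_C(d(O)))`. -/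
def Lsub {k F : Type*} [Field k] [Field F] [Algebra k F] {Pt : Type*}
    (L : (Pt →₀ ℤ) → Submodule k F) (O : Pt) (d : ℤ) : AddSubgroup (K2 F) :=
  AddSubgroup.closure
    { x | ∃ l m : Fˣ, (l : F) ∈ L (Finsupp.single O d) ∧
        (m : F) ∈ L (Finsupp.single O d) ∧ x = symbol l m }
/-- `F'_d`: the subgroup
`L_{3t} + ⟨{f_R, l} : R ∉ S, 2t + 1 ≤ deg(R) ≤ d, l ∈ RR_{3t}^*⟩` of `K₂(F)`
(Definition 4.2(2) of the paper). -/
def Fsub' (k : Type*) [Field k] {F : Type*} [Field F] [Algebra k F]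
    {Pt : Type*} (res : Pt → Type*) [∀ P, Field (res P)] [∀ P, Algebra k (res P)]
    (L : (Pt →₀ ℤ) → Submodule k F) (O : Pt) (t : ℕ) (fR : Pt → Fˣ) (S : Set Pt)
    (d : ℕ) : AddSubgroup (K2 F) :=
  Lsub L O (3 * t : ℤ) ⊔ AddSubgroup.closure
    { x | ∃ (R : Pt) (l : Fˣ), R ∉ S ∧
        2 * t + 1 ≤ Module.finrank k (res R) ∧ Module.finrank k (res R) ≤ d ∧
        (l : F) ∈ L (Finsupp.single O (3 * t : ℤ)) ∧ x = symbol (fR R) l }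

section Symbols

variable {F : Type*} [Field F]

lemma symbol_mul_left (f g h : Fˣ) : symbol (f * g) h = symbol f h + symbol g h := by
  simp only [symbol, ofMul_mul, TensorProduct.add_tmul, Submodule.Quotient.mk_add]

lemma symbol_mul_right (f g h : Fˣ) : symbol f (g * h) = symbol f g + symbol f h := by
  simp only [symbol, ofMul_mul, TensorProduct.tmul_add, Submodule.Quotient.mk_add]

lemma symbol_one_left (g : Fˣ) : symbol 1 g = 0 := by
  simpa using symbol_mul_left 1 1 g

lemma symbol_one_right (f : Fˣ) : symbol f 1 = 0 := by
  simpa using symbol_mul_right f 1 1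

lemma symbol_inv_left (f g : Fˣ) : symbol f⁻¹ g = -symbol f g := by
  rw [eq_neg_iff_add_eq_zero, ← symbol_mul_left, inv_mul_cancel, symbol_one_left]

lemma symbol_inv_right (f g : Fˣ) : symbol f g⁻¹ = -symbol f g := by
  rw [eq_neg_iff_add_eq_zero, ← symbol_mul_right, inv_mul_cancel, symbol_one_right]

lemma symbol_div_right (f g h : Fˣ) : symbol f (g / h) = symbol f g - symbol f h := by
  rw [div_eq_mul_inv, symbol_mul_right, symbol_inv_right, sub_eq_add_neg]

lemma symbol_eq_zero_of_add_eq_one {a b : Fˣ} (h : (a : F) + b = 1) : symbol a b = 0 :=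
  (Submodule.Quotient.mk_eq_zero _).2 (Submodule.subset_span ⟨a, b, h, rfl⟩)

lemma symbol_div_div_eq_zero {x y z : Fˣ} (h : (x : F) + y = z) :
    symbol (x / z) (y / z) = 0 := by
  apply symbol_eq_zero_of_add_eq_one
  rw [Units.val_div_eq_div_val, Units.val_div_eq_div_val, ← add_div, h, div_self z.ne_zero]

lemma symbol_neg_self (a : Fˣ) : symbol a (-a) = 0 := by
  by_cases h1 : a = 1
  · rw [h1, symbol_one_left]
  have hne : (1 : F) - a ≠ 0 := fun h => h1 (Units.ext (sub_eq_zero.1 h).symm)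
  have hne' : (1 : F) - (a⁻¹ : Fˣ) ≠ 0 := fun h =>
    h1 (inv_eq_one.1 (Units.ext (sub_eq_zero.1 h).symm))
  have e : -a = Units.mk0 _ hne / Units.mk0 _ hne' := by
    rw [eq_div_iff_mul_eq']
    ext
    simp [mul_sub]
  have h2 : symbol a (Units.mk0 _ hne) = 0 := symbol_eq_zero_of_add_eq_one (by simp)
  have h3 : symbol a⁻¹ (Units.mk0 _ hne') = 0 := symbol_eq_zero_of_add_eq_one (by simp)
  rw [symbol_inv_left, neg_eq_zero] at h3
  rw [e, symbol_div_right, h2, h3, sub_zero]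

lemma symbol_self (a : Fˣ) : symbol a a = symbol a (-1) := by
  have h := symbol_neg_self a
  rw [← neg_one_mul, symbol_mul_right] at h
  have h2 : symbol a (-1) + symbol a (-1) = 0 := by
    rw [← symbol_mul_right, neg_one_mul, neg_neg, symbol_one_right]
  exact add_left_cancel (h.trans h2.symm)

lemma symbol_swap (a b : Fˣ) : symbol a b = -symbol b a := by
  have h : symbol (a * b) (-(a * b)) = 0 := symbol_neg_self _
  have ha := symbol_neg_self a
  have hb := symbol_neg_self b
  have e1 : symbol a (-(a * b)) = symbol a (-a) + symbol a b := by
    rw [← symbol_mul_right, neg_mul]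
  have e2 : symbol b (-(a * b)) = symbol b (-b) + symbol b a := by
    rw [← symbol_mul_right, neg_mul, mul_comm]
  rw [symbol_mul_left, e1, e2, ha, hb, zero_add, zero_add] at h
  exact eq_neg_of_add_eq_zero_left h

/-- The subgroup of `K₂(F)` generated by the symbols with both entries in `V`. -/
def symbolSubgroup (V : Subgroup Fˣ) : AddSubgroup (K2 F) :=
  AddSubgroup.closure {x | ∃ a ∈ V, ∃ b ∈ V, x = symbol a b}

lemma symbol_mem_symbolSubgroup {V : Subgroup Fˣ} {a b : Fˣ} (ha : a ∈ V) (hb : b ∈ V) :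
    symbol a b ∈ symbolSubgroup V :=
  AddSubgroup.subset_closure ⟨a, ha, b, hb, rfl⟩

lemma symbol_mem_of_mem_closure {s : Set Fˣ} {B : AddSubgroup (K2 F)}
    (h : ∀ a ∈ s, ∀ b ∈ s, symbol a b ∈ B) {a b : Fˣ} (ha : a ∈ Subgroup.closure s)
    (hb : b ∈ Subgroup.closure s) : symbol a b ∈ B := by
  induction ha, hb using Subgroup.closure_induction₂ with
  | mem x y hx hy => exact h x hx y hy
  | one_left x _ => rw [symbol_one_left]; exact B.zero_mem
  | one_right x _ => rw [symbol_one_right]; exact B.zero_mem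
  | mul_left x y z _ _ _ h1 h2 => rw [symbol_mul_left]; exact B.add_mem h1 h2
  | mul_right y z x _ _ _ h1 h2 => rw [symbol_mul_right]; exact B.add_mem h1 h2
  | inv_left x y _ _ h1 => rw [symbol_inv_left]; exact B.neg_mem h1
  | inv_right x y _ _ h1 => rw [symbol_inv_right]; exact B.neg_mem h1

lemma symbolSubgroup_closure_le {s : Set Fˣ} {B : AddSubgroup (K2 F)}
    (h : ∀ a ∈ s, ∀ b ∈ s, symbol a b ∈ B) :
    symbolSubgroup (Subgroup.closure s) ≤ B := by
  rw [symbolSubgroup, AddSubgroup.closure_le]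
  rintro _ ⟨a, ha, b, hb, rfl⟩
  exact symbol_mem_of_mem_closure h ha hb

lemma symbolSubgroup_mono {V W : Subgroup Fˣ} (h : V ≤ W) :
    symbolSubgroup V ≤ symbolSubgroup W :=
  AddSubgroup.closure_mono fun _ ⟨a, ha, b, hb, hx⟩ => ⟨a, h ha, b, h hb, hx⟩

/-- If `x - y = f h` with `h, x, y ∈ V`, then `{f, x}` and `{f, y}` agree modulo `{V, V}`. -/
lemma symbol_sub_symbol_mem {V : Subgroup Fˣ} {f h x y : Fˣ} (hh : h ∈ V) (hx : x ∈ V)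
    (hy : y ∈ V) (e : (x : F) - y = f * h) :
    symbol f x - symbol f y ∈ symbolSubgroup V := by
  have h0 : symbol (f * h / x) (y / x) = 0 :=
    symbol_div_div_eq_zero (by rw [Units.val_mul, ← e, sub_add_cancel])
  rw [mul_div_assoc, symbol_mul_left, symbol_div_right f] at h0
  have h1 := symbol_mem_symbolSubgroup (V.div_mem hh hx) (V.div_mem hy hx)
  rw [← neg_sub, neg_eq_of_add_eq_zero_right h0]
  exact h1

end Symbols

section Rank

variable {k E : Type*} [Field k] [Field E] [Algebra k E]

lemma exists_ne_zero_mem_of_finrank_pos {A : Submodule k E} (h : 0 < Module.finrank k A) :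
    ∃ x ∈ A, x ≠ 0 := by
  apply Submodule.exists_mem_ne_zero_of_ne_bot
  rintro rfl
  simp at h

variable [FiniteDimensional k E]

lemma finrank_comap_mulLeft (A : Submodule k E) {α : E} (hα : α ≠ 0) :
    Module.finrank k (A.comap (LinearMap.mulLeft k α)) = Module.finrank k A := by
  have hinj : Function.Injective (LinearMap.mulLeft k α) := fun x y h => mul_left_cancel₀ hα h
  let e : E ≃ₗ[k] E := LinearEquiv.ofInjectiveEndo _ hinj
  have : A.comap (LinearMap.mulLeft k α) = A.map (e.symm : E →ₗ[k] E) := by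
    rw [← Submodule.comap_equiv_eq_map_symm]; rfl
  rw [this]
  exact LinearEquiv.finrank_map_eq e.symm A

lemma finrank_add_finrank_le_inf (A B : Submodule k E) :
    Module.finrank k A + Module.finrank k B ≤
      Module.finrank k (A ⊓ B : Submodule k E) + Module.finrank k E := by
  have h1 := Submodule.finrank_sup_add_finrank_inf_eq A B
  have h2 := Submodule.finrank_le (A ⊔ B)
  omega

lemma exists_common_multiplier₂ {A B : Submodule k E} {α β : E} (hα : α ≠ 0) (hβ : β ≠ 0)
    (h : Module.finrank k E < Module.finrank k A + Module.finrank k B) :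
    ∃ c : E, c ≠ 0 ∧ α * c ∈ A ∧ β * c ∈ B := by
  have h1 := finrank_add_finrank_le_inf (A.comap (LinearMap.mulLeft k α))
    (B.comap (LinearMap.mulLeft k β))
  rw [finrank_comap_mulLeft A hα, finrank_comap_mulLeft B hβ] at h1
  obtain ⟨c, hc, hc0⟩ := exists_ne_zero_mem_of_finrank_pos (k := k)
    (A := A.comap (LinearMap.mulLeft k α) ⊓ B.comap (LinearMap.mulLeft k β)) (by omega)
  exact ⟨c, hc0, hc.1, hc.2⟩

lemma exists_common_multiplier₃ {A : Submodule k E} {α β γ : E} (hα : α ≠ 0) (hβ : β ≠ 0)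
    (hγ : γ ≠ 0) (h : 2 * Module.finrank k E < 3 * Module.finrank k A) :
    ∃ c : E, c ≠ 0 ∧ α * c ∈ A ∧ β * c ∈ A ∧ γ * c ∈ A := by
  have h1 := finrank_add_finrank_le_inf (A.comap (LinearMap.mulLeft k α))
    (A.comap (LinearMap.mulLeft k β))
  have h2 := finrank_add_finrank_le_inf (A.comap (LinearMap.mulLeft k α) ⊓
    A.comap (LinearMap.mulLeft k β)) (A.comap (LinearMap.mulLeft k γ))
  rw [finrank_comap_mulLeft A hα, finrank_comap_mulLeft A hβ] at h1
  rw [finrank_comap_mulLeft A hγ] at h2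
  obtain ⟨c, hc, hc0⟩ := exists_ne_zero_mem_of_finrank_pos (k := k)
    (A := (A.comap (LinearMap.mulLeft k α) ⊓ A.comap (LinearMap.mulLeft k β)) ⊓
      A.comap (LinearMap.mulLeft k γ)) (by omega)
  exact ⟨c, hc0, hc.1.1, hc.1.2, hc.2⟩

end Rank

/-- A filtered version of the Bass–Tate lifting argument: a function on the nonzero elements of a
filtration `U` of a field `E` by subspaces that respects the multiplicative relations
`x y = x' y'` of total weight less than `2 [E : k]` extends to a homomorphism on `Eˣ`, as soon as
the subspaces `U n` are large enough. -/
theorem exists_multiplicative_extension {k E Q : Type*} [Field k] [Field E] [Algebra k E]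
    [FiniteDimensional k E] [AddCommGroup Q] {t e w : ℕ} (he : Module.finrank k E = e)
    (hte : 2 * t + 1 ≤ e) (hew : e ≤ w + 1) (htw : 3 * t ≤ w)
    (hw : w + 1 = e ∨ w = 3 * t)
    {U : ℕ → Submodule k E} (hU : Monotone U)
    (hdim : ∀ n ≤ w, n + 1 ≤ Module.finrank k (U n) + t) (ψ : E → Q)
    (hrel : ∀ a b c d : ℕ, a ≤ w → b ≤ w → c ≤ w → d ≤ w → a + b < 2 * e → c + d < 2 * e →
      ∀ x ∈ U a, ∀ y ∈ U b, ∀ x' ∈ U c, ∀ y' ∈ U d, x ≠ 0 → y ≠ 0 → x' ≠ 0 → y' ≠ 0 →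
        x * y = x' * y' → ψ x + ψ y = ψ x' + ψ y') :
    ∃ Φ : E → Q, (∀ α β, α ≠ 0 → β ≠ 0 → Φ (α * β) = Φ α + Φ β) ∧
      ∀ x ∈ U w, ∀ y ∈ U w, x ≠ 0 → y ≠ 0 → Φ (x / y) = ψ x - ψ y := by
  have hcm : ∀ a b : ℕ, a ≤ w → b ≤ w → e + 2 * t ≤ a + b + 1 → ∀ α β : E, α ≠ 0 → β ≠ 0 →
      ∃ c : E, c ≠ 0 ∧ α * c ∈ U a ∧ β * c ∈ U b := by
    intro a b ha hb hab α β hα hβ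
    refine exists_common_multiplier₂ hα hβ ?_
    have := hdim a ha
    have := hdim b hb
    omega
  have hW : ∀ a, a ≤ w → ∀ b, b ≤ e - 1 → a + b < 2 * e →
      ∀ x ∈ U a, ∀ y ∈ U b, ∀ r ∈ U (e - 1), ∀ s ∈ U (e - 1), x ≠ 0 → y ≠ 0 → r ≠ 0 → s ≠ 0 →
        x * s = y * r → ψ x + ψ s = ψ y + ψ r := by
    intro a
    induction a with
    | zero =>
      intro _ b hb _ x hx y hy r hr s hs hx0 hy0 hr0 hs0 h
      exact hrel 0 (e - 1) b (e - 1) (by omega) (by omega) (by omega) (by omega) (by omega)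
        (by omega) x hx s hs y hy r hr hx0 hs0 hy0 hr0 h
    | succ a ih =>
      intro haw b hb hab x hx y hy r hr s hs hx0 hy0 hr0 hs0 h
      by_cases hae : a + 1 ≤ e - 1
      · exact hrel (a + 1) (e - 1) b (e - 1) (by omega) (by omega) (by omega) (by omega)
          (by omega) (by omega) x hx s hs y hy r hr hx0 hs0 hy0 hr0 h
      obtain ⟨c, hc0, hxc, hyc⟩ := hcm a (2 * e - 2 - a) (by omega) (by omega) (by omega)
        x y hx0 hy0
      have h1 := hrel (a + 1) (2 * e - 2 - a) a (2 * e - 2 - a) (by omega) (by omega) (by omega)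
        (by omega) (by omega) (by omega) x hx (y * c) hyc (x * c) hxc y (hU (by omega) hy) hx0
        (mul_ne_zero hy0 hc0) (mul_ne_zero hx0 hc0) hy0 (by ring)
      have h2 := ih (by omega) (2 * e - 2 - a) (by omega) (by omega) (x * c) hxc (y * c) hyc
        r hr s hs (mul_ne_zero hx0 hc0) (mul_ne_zero hy0 hc0) hr0 hs0
        (by linear_combination c * h)
      have h3 := congrArg₂ (· + ·) h1 h2
      rw [← sub_eq_zero] at h3 ⊢
      rw [← h3]
      abel
  have hT : ∀ n, e - 1 ≤ n → n ≤ w → ∀ x ∈ U n, ∀ y ∈ U n, ∀ r ∈ U (e - 1), ∀ s ∈ U (e - 1),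
      x ≠ 0 → y ≠ 0 → r ≠ 0 → s ≠ 0 → x * s = y * r → ψ x + ψ s = ψ y + ψ r := by
    intro n hn
    induction n, hn using Nat.le_induction with
    | base =>
      intro _ x hx y hy r hr s hs hx0 hy0 hr0 hs0 h
      exact hW (e - 1) (by omega) (e - 1) (by omega) (by omega) x hx y hy r hr s hs
        hx0 hy0 hr0 hs0 h
    | succ n hn ih =>
      intro hnw x hx y hy r hr s hs hx0 hy0 hr0 hs0 h
      obtain ⟨c, hc0, hxc, hyc⟩ := hcm (e - 1) (e - 1) (by omega) (by omega) (by omega)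
        x y hx0 hy0
      obtain ⟨z, hz0, hz, hzc⟩ := hcm (e + 2 * t - 1 - n) n (by omega) (by omega) (by omega)
        1 c one_ne_zero hc0
      rw [one_mul] at hz
      have key : ∀ x ∈ U (n + 1), x ≠ 0 → x * c ∈ U (e - 1) →
          ψ x + ψ (c * z) = ψ z + ψ (x * c) := by
        intro x hx hx0 hxc
        obtain ⟨d, hd0, hxd, hzd⟩ := hcm (e - 1) (e - 1) (by omega) (by omega) (by omega)
          x z hx0 hz0
        have h1 := hW (n + 1) hnw (e + 2 * t - 1 - n) (by omega) (by omega) x hx z hz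
          (x * d) hxd (z * d) hzd hx0 hz0 (mul_ne_zero hx0 hd0) (mul_ne_zero hz0 hd0) (by ring)
        have h2 := ih (by omega) (x * c) (hU hn hxc) (c * z) hzc (x * d) hxd (z * d) hzd
          (mul_ne_zero hx0 hc0) (mul_ne_zero hc0 hz0) (mul_ne_zero hx0 hd0)
          (mul_ne_zero hz0 hd0) (by ring)
        have h3 := congrArg₂ (· - ·) h1 h2
        rw [← sub_eq_zero] at h3 ⊢
        rw [← h3]
        abel
      have h1 := key x hx hx0 hxc
      have h2 := key y hy hy0 hyc
      have h3 := hW (e - 1) (by omega) (e - 1) (by omega) (by omega) (x * c) hxc (y * c) hyc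
        r hr s hs (mul_ne_zero hx0 hc0) (mul_ne_zero hy0 hc0) hr0 hs0
        (by linear_combination c * h)
      have h4 := congrArg₂ (· + ·) (congrArg₂ (· - ·) h1 h2) h3
      rw [← sub_eq_zero] at h4 ⊢
      rw [← h4]
      abel
  have hTT : ∀ x ∈ U w, ∀ y ∈ U w, ∀ x' ∈ U w, ∀ y' ∈ U w, x ≠ 0 → y ≠ 0 → x' ≠ 0 → y' ≠ 0 →
      x * y' = y * x' → ψ x - ψ y = ψ x' - ψ y' := by
    intro x hx y hy x' hx' y' hy' hx0 hy0 hx0' hy0' h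
    obtain ⟨c, hc0, hxc, hyc⟩ := hcm (e - 1) (e - 1) (by omega) (by omega) (by omega)
      x y hx0 hy0
    have h1 := hT w (by omega) le_rfl x hx y hy (x * c) hxc (y * c) hyc hx0 hy0
      (mul_ne_zero hx0 hc0) (mul_ne_zero hy0 hc0) (by ring)
    have h2 := hT w (by omega) le_rfl x' hx' y' hy' (x * c) hxc (y * c) hyc hx0' hy0'
      (mul_ne_zero hx0 hc0) (mul_ne_zero hy0 hc0) (by linear_combination -c * h)
    have h4 := congrArg₂ (· - ·) h1 h2
    rw [← sub_eq_zero] at h4 ⊢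
    rw [← h4]
    abel
  have hex : ∀ α : E, α ≠ 0 → ∃ c : E, c ≠ 0 ∧ α * c ∈ U w ∧ 1 * c ∈ U w := fun α hα =>
    hcm w w le_rfl le_rfl (by omega) α 1 hα one_ne_zero
  choose! c hc0 hαc hc using hex
  simp only [one_mul] at hc
  have hΦ : ∀ x ∈ U w, ∀ y ∈ U w, x ≠ 0 → y ≠ 0 →
      ψ (x / y * c (x / y)) - ψ (c (x / y)) = ψ x - ψ y := by
    intro x hx y hy hx0 hy0
    have hxy := div_ne_zero hx0 hy0
    exact hTT _ (hαc _ hxy) _ (hc _ hxy) _ hx _ hy (mul_ne_zero hxy (hc0 _ hxy)) (hc0 _ hxy)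
      hx0 hy0 (by field_simp)
  refine ⟨fun α => ψ (α * c α) - ψ (c α), fun α β hα hβ => ?_, hΦ⟩
  obtain ⟨d, hd0, h1, h2, h3⟩ := exists_common_multiplier₃ (A := U w) (one_ne_zero (α := E)) hβ
    (mul_ne_zero hα hβ) (by have := hdim w le_rfl; omega)
  rw [one_mul] at h1
  have e1 := hΦ (β * d) h2 d h1 (mul_ne_zero hβ hd0) hd0
  have e2 := hΦ (α * β * d) h3 d h1 (mul_ne_zero (mul_ne_zero hα hβ) hd0) hd0
  have e3 := hΦ (α * β * d) h3 (β * d) h2 (mul_ne_zero (mul_ne_zero hα hβ) hd0)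
    (mul_ne_zero hβ hd0)
  rw [mul_div_cancel_right₀ _ hd0] at e1 e2
  rw [mul_assoc, mul_div_cancel_right₀ _ (mul_ne_zero hβ hd0)] at e3
  rw [← mul_assoc] at e3
  simp only [e1, e2, e3]
  abel

section Divisors

variable {k : Type*} [Field k] {Pt : Type*} {res : Pt → Type*}
  [∀ P, Field (res P)] [∀ P, Algebra k (res P)]

lemma divDeg_eq_sum (D : Pt →₀ ℤ) :
    divDeg k res D = D.sum fun P n => (Module.finrank k (res P) : ℤ) * n := by
  refine finsum_eq_sum_of_support_subset _ fun P hP => ?_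
  simp only [Function.mem_support, Finset.mem_coe, Finsupp.mem_support_iff] at hP ⊢
  exact right_ne_zero_of_mul hP

lemma divDeg_add (D E : Pt →₀ ℤ) :
    divDeg k res (D + E) = divDeg k res D + divDeg k res E := by
  classical
  simp only [divDeg_eq_sum]
  exact Finsupp.sum_add_index' (fun _ => mul_zero _) fun _ _ _ => mul_add _ _ _

lemma divDeg_zero : divDeg k res (0 : Pt →₀ ℤ) = 0 := by
  rw [divDeg_eq_sum, Finsupp.sum_zero_index]

lemma divDeg_neg (D : Pt →₀ ℤ) : divDeg k res (-D) = -divDeg k res D := by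
  rw [eq_neg_iff_add_eq_zero, ← divDeg_add, neg_add_cancel, divDeg_zero]

lemma divDeg_sub (D E : Pt →₀ ℤ) :
    divDeg k res (D - E) = divDeg k res D - divDeg k res E := by
  rw [sub_eq_add_neg, divDeg_add, divDeg_neg, sub_eq_add_neg]

lemma divDeg_single (P : Pt) (n : ℤ) :
    divDeg k res (Finsupp.single P n) = Module.finrank k (res P) * n := by
  rw [divDeg_eq_sum, Finsupp.sum_single_index (mul_zero _)]

lemma divDeg_nonneg {E : Pt →₀ ℤ} (hE : 0 ≤ E) : 0 ≤ divDeg k res E := by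
  rw [divDeg_eq_sum]
  exact Finset.sum_nonneg fun P _ => mul_nonneg (Nat.cast_nonneg _) (hE P)

lemma finrank_le_divDeg {E : Pt →₀ ℤ} (hE : 0 ≤ E) {P : Pt} (hP : E P ≠ 0) :
    (Module.finrank k (res P) : ℤ) ≤ divDeg k res E := by
  classical
  have h1 : 1 ≤ E P := by have := hE P; simp only [Finsupp.coe_zero, Pi.zero_apply] at this; omega
  have h2 : 0 ≤ E - Finsupp.single P 1 := fun Q => by
    have := hE Q
    simp only [Finsupp.coe_zero, Pi.zero_apply, Finsupp.coe_sub, Pi.sub_apply,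
      Finsupp.single_apply] at this ⊢
    split_ifs with h
    · subst h; omega
    · omega
  have h3 := divDeg_nonneg (k := k) (res := res) h2
  rw [divDeg_sub, divDeg_single] at h3
  linarith

end Divisors

namespace IsProjCurve

variable {k F : Type*} [Field k] [Field F] [Algebra k F]
  {Pt : Type*} {res : Pt → Type*} [∀ P, Field (res P)] [∀ P, Algebra k (res P)]
  {ord : Pt → F → ℤ} {ev : ∀ P, F → res P} {L : (Pt →₀ ℤ) → Submodule k F} {t : ℕ}

lemma ord_one (hC : IsProjCurve k F res ord ev L t)
    (P : Pt) : ord P 1 = 0 := by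
  simpa using hC.ord_algebraMap P 1 one_ne_zero

lemma ord_neg_one (hC : IsProjCurve k F res ord ev L t)
    (P : Pt) : ord P (-1) = 0 := by
  simpa using hC.ord_algebraMap P (-1) (by simp)

lemma ord_units_mul (hC : IsProjCurve k F res ord ev L t)
    (P : Pt) (f g : Fˣ) :
    ord P ((f * g : Fˣ) : F) = ord P (f : F) + ord P (g : F) := by
  rw [Units.val_mul, hC.ord_mul P _ _ f.ne_zero g.ne_zero]

lemma ord_units_inv (hC : IsProjCurve k F res ord ev L t)
    (P : Pt) (f : Fˣ) : ord P ((f⁻¹ : Fˣ) : F) = -ord P (f : F) := by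
  rw [eq_neg_iff_add_eq_zero, ← hC.ord_units_mul, inv_mul_cancel, Units.val_one, hC.ord_one]

lemma ord_units_div (hC : IsProjCurve k F res ord ev L t)
    (P : Pt) (f g : Fˣ) :
    ord P ((f / g : Fˣ) : F) = ord P (f : F) - ord P (g : F) := by
  rw [div_eq_mul_inv, hC.ord_units_mul, hC.ord_units_inv, sub_eq_add_neg]

lemma units_mem_L (hC : IsProjCurve k F res ord ev L t)
    {D : Pt →₀ ℤ} {f : Fˣ} : (f : F) ∈ L D ↔ ∀ P, 0 ≤ D P + ord P (f : F) := by
  simp [hC.mem_L]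

lemma L_mono (hC : IsProjCurve k F res ord ev L t)
    {D E : Pt →₀ ℤ} (h : D ≤ E) : L D ≤ L E := fun f hf => by
  rw [hC.mem_L] at hf ⊢
  exact fun h0 P => (hf h0 P).trans (add_le_add_left (h P) _)

lemma mul_mem_L (hC : IsProjCurve k F res ord ev L t)
    {D E : Pt →₀ ℤ} {f g : F} (hf : f ∈ L D) (hg : g ∈ L E) : f * g ∈ L (D + E) := by
  rw [hC.mem_L] at *
  intro h P
  have hf0 := left_ne_zero_of_mul h
  have hg0 := right_ne_zero_of_mul h
  have h1 := hf hf0 P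
  have h2 := hg hg0 P
  rw [hC.ord_mul P f g hf0 hg0, Finsupp.add_apply]
  linarith

lemma one_mem_L (hC : IsProjCurve k F res ord ev L t)
    {D : Pt →₀ ℤ} (h : 0 ≤ D) : (1 : F) ∈ L D := by
  rw [hC.mem_L]
  intro _ P
  rw [hC.ord_one, add_zero]
  exact h P

lemma exists_units_mem_L (hC : IsProjCurve k F res ord ev L t)
    {D : Pt →₀ ℤ} (h : t ≤ divDeg k res D) : ∃ f : Fˣ, (f : F) ∈ L D := by
  have h1 := hC.rr_ineq D
  have : FiniteDimensional k (L D) := hC.finiteDimensional_L D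
  obtain ⟨f, hf, hf0⟩ := exists_ne_zero_mem_of_finrank_pos (k := k) (A := L D) (by omega)
  exact ⟨Units.mk0 f hf0, hf⟩

/-- The divisor of a nonzero function. -/
def dv (hC : IsProjCurve k F res ord ev L t) (f : Fˣ) : Pt →₀ ℤ :=
  Finsupp.ofSupportFinite (fun P => ord P (f : F)) (hC.support_finite f f.ne_zero)

lemma dv_apply (hC : IsProjCurve k F res ord ev L t)
    (f : Fˣ) (P : Pt) : hC.dv f P = ord P (f : F) := rfl

lemma dv_mul (hC : IsProjCurve k F res ord ev L t)
    (f g : Fˣ) : hC.dv (f * g) = hC.dv f + hC.dv g :=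
  Finsupp.ext fun P => hC.ord_units_mul P f g

lemma dv_inv (hC : IsProjCurve k F res ord ev L t)
    (f : Fˣ) : hC.dv f⁻¹ = -hC.dv f := Finsupp.ext fun P => hC.ord_units_inv P f

lemma dv_one (hC : IsProjCurve k F res ord ev L t) : hC.dv 1 = 0 :=
  Finsupp.ext fun P => hC.ord_one P

lemma divDeg_dv (hC : IsProjCurve k F res ord ev L t)
    (f : Fˣ) : divDeg k res (hC.dv f) = 0 := hC.degree_formula f f.ne_zero

lemma mem_L_iff_dv (hC : IsProjCurve k F res ord ev L t)
    {D : Pt →₀ ℤ} {f : Fˣ} : (f : F) ∈ L D ↔ 0 ≤ D + hC.dv f := hC.units_mem_L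

lemma divDeg_add_dv (hC : IsProjCurve k F res ord ev L t)
    (D : Pt →₀ ℤ) (f : Fˣ) :
    divDeg k res (D + hC.dv f) = divDeg k res D := by
  rw [divDeg_add, hC.divDeg_dv, add_zero]

/-- The points of the effective divisor of a section of `D` have degree at most `deg D`. -/
lemma add_ord_eq_zero (hC : IsProjCurve k F res ord ev L t)
    {D : Pt →₀ ℤ} {f : Fˣ} (hf : (f : F) ∈ L D) {P : Pt}
    (hP : divDeg k res D < Module.finrank k (res P)) : D P + ord P (f : F) = 0 := by
  by_contra h
  have := finrank_le_divDeg (k := k) (res := res) (hC.mem_L_iff_dv.1 hf) (P := P) h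
  rw [hC.divDeg_add_dv] at this
  omega

end IsProjCurve

/-- A curve with a rational point `O`, the set `S` of points at which some nonzero function of
`L(3t(O))` vanishes, and functions `fR R` with divisor `(R) - D - (deg R - t)(O)`. -/
structure IsPointedCurve (k F : Type*) [Field k] [Field F] [Algebra k F]
    {Pt : Type*} (res : Pt → Type*) [∀ P, Field (res P)] [∀ P, Algebra k (res P)]
    (ord : Pt → F → ℤ) (ev : ∀ P, F → res P) (L : (Pt →₀ ℤ) → Submodule k F) (t : ℕ)
    (O : Pt) (fR : Pt → Fˣ) (S : Set Pt) : Prop extends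
    IsProjCurve k F res ord ev L t where
  one_le_genus : 1 ≤ t
  finrank_O : Module.finrank k (res O) = 1
  fR_spec : ∀ R, R ≠ O → t + 1 ≤ Module.finrank k (res R) →
    ∃ D : Pt →₀ ℤ, 0 ≤ D ∧ divDeg k res D = t ∧ ∀ Q, ord Q (fR R : F) =
      (Finsupp.single R 1 - D - Finsupp.single O ((Module.finrank k (res R) : ℤ) - t) :
        Pt →₀ ℤ) Q
  S_eq : S = {P | L (Finsupp.single O (3 * t : ℤ) - Finsupp.single P 1) ≠ ⊥}

/-- The subgroup of `Fˣ` generated by the nonzero elements of `L(3t(O))` and the functions `fR Q`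
for the points `Q ∉ S` of degree less than `e`. -/
def unitFiltration (k : Type*) [Field k] {F : Type*} [Field F] [Algebra k F]
    {Pt : Type*} (res : Pt → Type*) [∀ P, Field (res P)] [∀ P, Algebra k (res P)]
    (L : (Pt →₀ ℤ) → Submodule k F) (t : ℕ) (O : Pt) (fR : Pt → Fˣ) (S : Set Pt) (e : ℕ) :
    Subgroup Fˣ :=
  Subgroup.closure ({l | (l : F) ∈ L (Finsupp.single O (3 * t : ℤ))} ∪
    {f | ∃ Q, Q ∉ S ∧ Module.finrank k (res Q) < e ∧ f = fR Q})

namespace IsPointedCurve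

variable {k F : Type*} [Field k] [Field F] [Algebra k F]
  {Pt : Type*} {res : Pt → Type*} [∀ P, Field (res P)] [∀ P, Algebra k (res P)]
  {ord : Pt → F → ℤ} {ev : ∀ P, F → res P} {L : (Pt →₀ ℤ) → Submodule k F} {t : ℕ}
  {O : Pt} {fR : Pt → Fˣ} {S : Set Pt}

lemma not_mem_S_iff (h : IsPointedCurve k F res ord ev L t O fR S) {P : Pt} :
    P ∉ S ↔ L (Finsupp.single O (3 * t : ℤ) - Finsupp.single P 1) = ⊥ := by
  rw [h.S_eq, Set.mem_ofPred_eq, not_not]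

lemma not_mem_L_of_not_mem_S (h : IsPointedCurve k F res ord ev L t O fR S) {P : Pt}
    (hP : P ∉ S) (f : Fˣ) :
    (f : F) ∉ L (Finsupp.single O (3 * t : ℤ) - Finsupp.single P 1) := by
  rw [h.not_mem_S_iff.1 hP, Submodule.mem_bot]
  exact f.ne_zero

lemma divDeg_single_O (h : IsPointedCurve k F res ord ev L t O fR S) (n : ℤ) :
    divDeg k res (Finsupp.single O n) = n := by
  rw [divDeg_single, h.finrank_O, Nat.cast_one, one_mul]

lemma two_mul_genus_lt (h : IsPointedCurve k F res ord ev L t O fR S) {P : Pt} (hP : P ∉ S) :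
    2 * t + 1 ≤ Module.finrank k (res P) := by
  by_contra hlt
  obtain ⟨f, hf⟩ := h.exists_units_mem_L (D := Finsupp.single O (3 * t : ℤ) - Finsupp.single P 1)
    (by rw [divDeg_sub, h.divDeg_single_O, divDeg_single]; omega)
  exact h.not_mem_L_of_not_mem_S hP f hf

lemma ne_O (h : IsPointedCurve k F res ord ev L t O fR S) {P : Pt} (hP : P ∉ S) : P ≠ O := by
  rintro rfl
  have h1 := h.two_mul_genus_lt hP
  have h2 := h.one_le_genus
  rw [h.finrank_O] at h1
  omega

lemma exists_dv_fR (h : IsPointedCurve k F res ord ev L t O fR S) {R : Pt} (hR : R ∉ S) :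
    ∃ D : Pt →₀ ℤ, 0 ≤ D ∧ divDeg k res D = t ∧ h.dv (fR R) =
      Finsupp.single R 1 - D - Finsupp.single O ((Module.finrank k (res R) : ℤ) - t) := by
  obtain ⟨D, h1, h2, h3⟩ := h.fR_spec R (h.ne_O hR) (by have := h.two_mul_genus_lt hR; omega)
  exact ⟨D, h1, h2, Finsupp.ext h3⟩

lemma eq_zero_of_divDeg_eq (h : IsPointedCurve k F res ord ev L t O fR S) {D : Pt →₀ ℤ}
    (hD : 0 ≤ D) (hDt : divDeg k res D = t) {P : Pt} (hP : P ∉ S) : D P = 0 := by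
  by_contra h0
  have h1 := finrank_le_divDeg (k := k) (res := res) hD h0
  have h2 := h.two_mul_genus_lt hP
  omega

lemma ord_fR_self (h : IsPointedCurve k F res ord ev L t O fR S) {P : Pt} (hP : P ∉ S) :
    ord P (fR P : F) = 1 := by
  obtain ⟨D, h1, h2, h3⟩ := h.exists_dv_fR hP
  have h4 := DFunLike.congr_fun h3 P
  simpa [h.dv_apply, h.eq_zero_of_divDeg_eq h1 h2 hP, Finsupp.single_eq_of_ne (h.ne_O hP)]
    using h4

lemma ord_fR_of_ne (h : IsPointedCurve k F res ord ev L t O fR S) {P Q : Pt} (hP : P ∉ S)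
    (hQ : Q ∉ S) (hPQ : P ≠ Q) : ord P (fR Q : F) = 0 := by
  obtain ⟨D, h1, h2, h3⟩ := h.exists_dv_fR hQ
  have h4 := DFunLike.congr_fun h3 P
  simpa [h.dv_apply, h.eq_zero_of_divDeg_eq h1 h2 hP, Finsupp.single_eq_of_ne (h.ne_O hP),
    Finsupp.single_eq_of_ne hPQ] using h4

lemma ord_nonneg_of_mem_L (h : IsPointedCurve k F res ord ev L t O fR S) {n : ℤ} {f : Fˣ}
    (hf : (f : F) ∈ L (Finsupp.single O n)) {P : Pt} (hP : P ≠ O) : 0 ≤ ord P (f : F) := by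
  have := h.units_mem_L.1 hf P
  rwa [Finsupp.single_eq_of_ne hP, zero_add] at this

lemma mem_L_sub_single (h : IsPointedCurve k F res ord ev L t O fR S) {D : Pt →₀ ℤ} {f : Fˣ}
    (hf : (f : F) ∈ L D) {P : Pt} (hP : 0 < D P + ord P (f : F)) :
    (f : F) ∈ L (D - Finsupp.single P 1) := by
  classical
  rw [h.units_mem_L] at hf ⊢
  intro Q
  have := hf Q
  rw [Finsupp.sub_apply, Finsupp.single_apply]
  split_ifs with hQ
  · subst hQ; omega
  · omega

lemma ord_eq_zero_of_mem_L (h : IsPointedCurve k F res ord ev L t O fR S) {f : Fˣ}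
    (hf : (f : F) ∈ L (Finsupp.single O (3 * t : ℤ))) {P : Pt} (hP : P ∉ S) :
    ord P (f : F) = 0 := by
  by_contra h0
  have h1 := h.ord_nonneg_of_mem_L hf (h.ne_O hP)
  refine h.not_mem_L_of_not_mem_S hP f (h.mem_L_sub_single hf ?_)
  rw [Finsupp.single_eq_of_ne (h.ne_O hP)]
  omega

lemma ord_eq_zero_of_mem_unitFiltration (h : IsPointedCurve k F res ord ev L t O fR S) {e : ℕ}
    {f : Fˣ} (hf : f ∈ unitFiltration k res L t O fR S e) {P : Pt} (hP : P ∉ S)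
    (he : e ≤ Module.finrank k (res P)) : ord P (f : F) = 0 := by
  induction hf using Subgroup.closure_induction with
  | mem f hf =>
    rcases hf with hf | ⟨Q, hQ, hQe, rfl⟩
    · exact h.ord_eq_zero_of_mem_L hf hP
    · exact h.ord_fR_of_ne hP hQ (by rintro rfl; omega)
  | one => exact h.ord_one P
  | mul f g _ _ hf hg => rw [h.ord_units_mul, hf, hg, add_zero]
  | inv f _ hf => rw [h.ord_units_inv, hf, neg_zero]

lemma exists_complement (h : IsPointedCurve k F res ord ev L t O fR S) {A : Pt →₀ ℤ}
    (hA : 0 ≤ A) (hAt : divDeg k res A ≤ 2 * t) :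
    ∃ g : Fˣ, (g : F) ∈ L (Finsupp.single O (3 * t : ℤ)) ∧ ∃ B : Pt →₀ ℤ, 0 ≤ B ∧
      divDeg k res B ≤ t ∧ ∃ n : ℤ, A + B = h.dv g + Finsupp.single O n := by
  have hdeg : divDeg k res (Finsupp.single O (divDeg k res A + t) - A) = t := by
    rw [divDeg_sub, h.divDeg_single_O]; ring
  obtain ⟨g, hg⟩ := h.exists_units_mem_L hdeg.ge
  refine ⟨g, h.L_mono ?_ hg, _, h.mem_L_iff_dv.1 hg, ?_, divDeg k res A + t, ?_⟩
  · refine (sub_le_self _ hA).trans ?_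
    rw [Finsupp.single_le_single]
    omega
  · rw [h.divDeg_add_dv, hdeg]
  · abel

/-- The divisors that are equivalent, modulo divisors of elements of `V` and multiples of `O`, to
effective divisors of degree at most `t`. -/
def reducibleDivisors (h : IsPointedCurve k F res ord ev L t O fR S) (V : Subgroup Fˣ)
    (hV : ∀ l : Fˣ, (l : F) ∈ L (Finsupp.single O (3 * t : ℤ)) → l ∈ V) :
    AddSubgroup (Pt →₀ ℤ) where
  carrier := {D | ∃ f ∈ V, ∃ E : Pt →₀ ℤ, 0 ≤ E ∧ divDeg k res E ≤ t ∧ ∃ m : ℤ,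
    D = E + Finsupp.single O m + h.dv f}
  zero_mem' := ⟨1, V.one_mem, 0, le_rfl, by rw [divDeg_zero]; omega, 0, by simp [h.dv_one]⟩
  add_mem' := by
    rintro _ _ ⟨f, hf, E, hE, hEt, m, rfl⟩ ⟨f', hf', E', hE', hEt', m', rfl⟩
    obtain ⟨g, hg, B, hB, hBt, n, e⟩ := h.exists_complement (add_nonneg hE hE')
      (by rw [divDeg_add]; omega)
    obtain ⟨g', hg', B', hB', hBt', n', e'⟩ := h.exists_complement hB (by omega)
    refine ⟨f * f' * g / g', V.div_mem (V.mul_mem (V.mul_mem hf hf') (hV _ hg)) (hV _ hg'),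
      B', hB', hBt', m + m' + n - n', ?_⟩
    rw [div_eq_mul_inv, h.dv_mul, h.dv_mul, h.dv_mul, h.dv_inv, Finsupp.single_sub,
      Finsupp.single_add, Finsupp.single_add]
    rw [← sub_eq_zero] at e e' ⊢
    rw [← sub_zero (0 : Pt →₀ ℤ)]
    nth_rewrite 1 [← e]
    rw [← e']
    abel
  neg_mem' := by
    rintro _ ⟨f, hf, E, hE, hEt, m, rfl⟩
    obtain ⟨g, hg, B, hB, hBt, n, e⟩ := h.exists_complement hE (by omega)
    refine ⟨f⁻¹ / g, V.div_mem (V.inv_mem hf) (hV _ hg), B, hB, hBt, -m - n, ?_⟩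
    rw [div_eq_mul_inv, h.dv_mul, h.dv_inv, h.dv_inv, Finsupp.single_sub, Finsupp.single_neg]
    rw [← sub_eq_zero] at e ⊢
    rw [← neg_zero, ← e]
    abel

lemma mem_of_dv_mem_reducibleDivisors (h : IsPointedCurve k F res ord ev L t O fR S)
    {V : Subgroup Fˣ} (hV : ∀ l : Fˣ, (l : F) ∈ L (Finsupp.single O (3 * t : ℤ)) → l ∈ V)
    {f : Fˣ} (hf : h.dv f ∈ h.reducibleDivisors V hV) : f ∈ V := by
  obtain ⟨g, hg, E, hE, hEt, m, e⟩ := hf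
  have hdv : h.dv (f / g) = E + Finsupp.single O m := by
    rw [div_eq_mul_inv, h.dv_mul, h.dv_inv, e]; abel
  have hm := h.divDeg_dv (f / g)
  rw [hdv, divDeg_add, h.divDeg_single_O] at hm
  have : f / g ∈ V := by
    refine hV _ (h.mem_L_iff_dv.2 ?_)
    rw [hdv, add_left_comm, ← Finsupp.single_add]
    exact add_nonneg hE (Finsupp.single_nonneg.2 (by omega))
  simpa using V.mul_mem this hg

lemma single_mem_reducibleDivisors (h : IsPointedCurve k F res ord ev L t O fR S) {e : ℕ}
    (hV : ∀ l : Fˣ, (l : F) ∈ L (Finsupp.single O (3 * t : ℤ)) →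
      l ∈ unitFiltration k res L t O fR S e)
    {Q : Pt} (hQ : Q ∉ S → Module.finrank k (res Q) < e) :
    Finsupp.single Q 1 ∈ h.reducibleDivisors _ hV := by
  have hmem : ∀ (f : Fˣ) (E : Pt →₀ ℤ) (m : ℤ), f ∈ unitFiltration k res L t O fR S e → 0 ≤ E →
      divDeg k res E ≤ t → E + Finsupp.single O m + h.dv f ∈ h.reducibleDivisors _ hV :=
    fun f E m hf hE hEt => ⟨f, hf, E, hE, hEt, m, rfl⟩
  have hdegQ : divDeg k res (Finsupp.single Q 1) = Module.finrank k (res Q) := by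
    rw [divDeg_single, mul_one]
  have hQ0 : (0 : Pt →₀ ℤ) ≤ Finsupp.single Q 1 := Finsupp.single_nonneg.2 zero_le_one
  by_cases hQS : Q ∈ S
  · by_cases hQt : Module.finrank k (res Q) ≤ 2 * t
    · obtain ⟨g, hg, B, hB, hBt, n, e⟩ := h.exists_complement hQ0 (by rw [hdegQ]; omega)
      rw [← (h.reducibleDivisors _ hV).neg_mem_iff]
      convert! hmem g⁻¹ B (-n) (Subgroup.inv_mem _ (hV g hg)) hB hBt using 1
      rw [h.dv_inv, Finsupp.single_neg]
      rw [← sub_eq_zero] at e ⊢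
      rw [← neg_zero, ← e]
      abel
    · rw [h.S_eq] at hQS
      obtain ⟨g, hg, hg0⟩ := Submodule.exists_mem_ne_zero_of_ne_bot hQS
      obtain ⟨g, rfl⟩ : ∃ u : Fˣ, (u : F) = g := ⟨Units.mk0 g hg0, rfl⟩
      rw [← (h.reducibleDivisors _ hV).neg_mem_iff]
      convert! hmem g⁻¹ (Finsupp.single O (3 * t : ℤ) - Finsupp.single Q 1 + h.dv g) (-(3 * t))
        (Subgroup.inv_mem _ (hV g (h.L_mono (sub_le_self _ hQ0) hg)))
        (h.mem_L_iff_dv.1 hg) ?_ using 1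
      · rw [h.dv_inv, Finsupp.single_neg]
        abel
      · rw [h.divDeg_add_dv, divDeg_sub, hdegQ, h.divDeg_single_O]
        omega
  · obtain ⟨D, hD, hDt, hdv⟩ := h.exists_dv_fR hQS
    convert! hmem (fR Q) D ((Module.finrank k (res Q) : ℤ) - t)
      (Subgroup.subset_closure (Or.inr ⟨Q, hQS, hQ hQS, rfl⟩)) hD hDt.le using 1
    rw [hdv]
    abel

lemma mem_unitFiltration_of_mem_L (e : ℕ) (l : Fˣ)
    (hl : (l : F) ∈ L (Finsupp.single O (3 * t : ℤ))) : l ∈ unitFiltration k res L t O fR S e :=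
  Subgroup.subset_closure (Or.inl hl)

lemma mem_unitFiltration (h : IsPointedCurve k F res ord ev L t O fR S) {e : ℕ} {f : Fˣ}
    (hf : ∀ P, P ∉ S → e ≤ Module.finrank k (res P) → ord P (f : F) = 0) :
    f ∈ unitFiltration k res L t O fR S e := by
  have hV := mem_unitFiltration_of_mem_L (k := k) (F := F) (res := res) (L := L) (t := t) (O := O)
    (fR := fR) (S := S) e
  refine h.mem_of_dv_mem_reducibleDivisors hV ?_
  rw [← Finsupp.sum_single (h.dv f)]
  refine AddSubgroup.sum_mem _ fun P hP => ?_
  rw [← mul_one (h.dv f P), ← smul_eq_mul, ← Finsupp.smul_single]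
  refine AddSubgroup.zsmul_mem _ (h.single_mem_reducibleDivisors hV fun hPS => ?_) _
  by_contra hlt
  exact Finsupp.mem_support_iff.1 hP (hf P hPS (not_lt.1 hlt))

lemma unitFiltration_mono {d e : ℕ} (hde : d ≤ e) :
    unitFiltration k res L t O fR S d ≤ unitFiltration k res L t O fR S e :=
  Subgroup.closure_mono (Set.union_subset_union_right _
    fun _ ⟨Q, hQ, hQd, hf⟩ => ⟨Q, hQ, hQd.trans_le hde, hf⟩)

end IsPointedCurve

namespace IsProjCurve

variable {k F : Type*} [Field k] [Field F] [Algebra k F]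
  {Pt : Type*} {res : Pt → Type*} [∀ P, Field (res P)] [∀ P, Algebra k (res P)]
  {ord : Pt → F → ℤ} {ev : ∀ P, F → res P} {L : (Pt →₀ ℤ) → Submodule k F} {t : ℕ}

lemma ev_add_of_regular (hC : IsProjCurve k F res ord ev L t) {P : Pt} {f g : F}
    (hf : f ≠ 0 → 0 ≤ ord P f) (hg : g ≠ 0 → 0 ≤ ord P g) :
    ev P (f + g) = ev P f + ev P g := by
  rcases eq_or_ne f 0 with rfl | hf0
  · rw [zero_add, hC.ev_zero, zero_add]
  rcases eq_or_ne g 0 with rfl | hg0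
  · rw [add_zero, hC.ev_zero, add_zero]
  exact hC.ev_add P f g hf0 hg0 (hf hf0) (hg hg0)

lemma ev_mul_of_regular (hC : IsProjCurve k F res ord ev L t) {P : Pt} {f g : F}
    (hf : f ≠ 0 → 0 ≤ ord P f) (hg : g ≠ 0 → 0 ≤ ord P g) :
    ev P (f * g) = ev P f * ev P g := by
  rcases eq_or_ne f 0 with rfl | hf0
  · rw [zero_mul, hC.ev_zero, zero_mul]
  rcases eq_or_ne g 0 with rfl | hg0
  · rw [mul_zero, hC.ev_zero, mul_zero]
  exact hC.ev_mul P f g hf0 hg0 (hf hf0) (hg hg0)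

lemma ev_units_mul (hC : IsProjCurve k F res ord ev L t) {P : Pt} {f g : Fˣ}
    (hf : 0 ≤ ord P (f : F)) (hg : 0 ≤ ord P (g : F)) :
    ev P ((f * g : Fˣ) : F) = ev P (f : F) * ev P (g : F) :=
  hC.ev_mul P f g f.ne_zero g.ne_zero hf hg

lemma ev_units_ne_zero (hC : IsProjCurve k F res ord ev L t) {P : Pt} {f : Fˣ}
    (hf : ord P (f : F) = 0) : ev P (f : F) ≠ 0 := by
  rw [ne_eq, hC.ev_eq_zero_iff P f f.ne_zero hf.ge, hf]
  exact lt_irrefl 0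

lemma ev_units_inv (hC : IsProjCurve k F res ord ev L t) {P : Pt} {f : Fˣ}
    (hf : ord P (f : F) = 0) : ev P ((f⁻¹ : Fˣ) : F) = (ev P (f : F))⁻¹ := by
  refine eq_inv_of_mul_eq_one_left ?_
  rw [← hC.ev_units_mul (by rw [hC.ord_units_inv, hf, neg_zero]) hf.ge, inv_mul_cancel,
    Units.val_one, hC.ev_one]

lemma regular_of_mem_L (hC : IsProjCurve k F res ord ev L t) {P : Pt} {D : Pt →₀ ℤ}
    (hD : D P = 0) {f : F} (hf : f ∈ L D) (h0 : f ≠ 0) : 0 ≤ ord P f := by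
  have := (hC.mem_L D f).1 hf h0 P
  rwa [hD, zero_add] at this

/-- Evaluation at `P` of the sections of a divisor not containing `P`. -/
def evL (hC : IsProjCurve k F res ord ev L t) (D : Pt →₀ ℤ) (P : Pt) (hD : D P = 0) :
    L D →ₗ[k] res P where
  toFun f := ev P f
  map_add' f g := hC.ev_add_of_regular (hC.regular_of_mem_L hD f.2) (hC.regular_of_mem_L hD g.2)
  map_smul' c f := by
    have hc : algebraMap k F c ≠ 0 → 0 ≤ ord P (algebraMap k F c) := fun hc =>
      (hC.ord_algebraMap P c fun h => hc (by rw [h, map_zero])).ge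
    rw [Submodule.coe_smul, Algebra.smul_def,
      hC.ev_mul_of_regular hc (hC.regular_of_mem_L hD f.2), hC.ev_algebraMap, RingHom.id_apply,
      Algebra.smul_def]

lemma ev_sub_of_mem_L (hC : IsProjCurve k F res ord ev L t) {P : Pt} {D : Pt →₀ ℤ}
    (hD : D P = 0) {f g : F} (hf : f ∈ L D) (hg : g ∈ L D) :
    ev P (f - g) = ev P f - ev P g :=
  map_sub (hC.evL D P hD) ⟨f, hf⟩ ⟨g, hg⟩

end IsProjCurve

namespace IsPointedCurve

variable {k F : Type*} [Field k] [Field F] [Algebra k F]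
  {Pt : Type*} {res : Pt → Type*} [∀ P, Field (res P)] [∀ P, Algebra k (res P)]
  {ord : Pt → F → ℤ} {ev : ∀ P, F → res P} {L : (Pt →₀ ℤ) → Submodule k F} {t : ℕ}
  {O : Pt} {fR : Pt → Fˣ} {S : Set Pt}

lemma mem_unitFiltration_of_mem_L_of_lt (h : IsPointedCurve k F res ord ev L t O fR S)
    {e w : ℕ} (hw : w + 1 = e ∨ w = 3 * t) {l : Fˣ}
    (hl : (l : F) ∈ L (Finsupp.single O (w : ℤ))) : l ∈ unitFiltration k res L t O fR S e := by
  rcases hw with hw | rfl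
  · refine h.mem_unitFiltration fun P hP hPe => ?_
    have := h.add_ord_eq_zero hl (P := P) (by rw [h.divDeg_single_O]; omega)
    rwa [Finsupp.single_eq_of_ne (h.ne_O hP), zero_add] at this
  · exact mem_unitFiltration_of_mem_L e l (by exact_mod_cast hl)

lemma eq_of_ev_eq (h : IsPointedCurve k F res ord ev L t O fR S) {P : Pt} (hP : P ∉ S) {w : ℕ}
    (hw : w + 1 = Module.finrank k (res P) ∨ w = 3 * t) {x y : F}
    (hx : x ∈ L (Finsupp.single O (w : ℤ))) (hy : y ∈ L (Finsupp.single O (w : ℤ)))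
    (hxy : ev P x = ev P y) : x = y := by
  by_contra hne
  have hO : (Finsupp.single O (w : ℤ)) P = 0 := Finsupp.single_eq_of_ne (h.ne_O hP)
  have hz : x - y ∈ L (Finsupp.single O (w : ℤ)) := Submodule.sub_mem _ hx hy
  have h0 : ev P (x - y) = 0 := by rw [h.ev_sub_of_mem_L hO hx hy, hxy, sub_self]
  have hu := h.ord_eq_zero_of_mem_unitFiltration
    (h.mem_unitFiltration_of_mem_L_of_lt hw (l := Units.mk0 _ (sub_ne_zero.2 hne)) hz) hP le_rfl
  exact h.ev_units_ne_zero hu h0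

/-- The values at `P` of the functions in `L(n(O))`. -/
def values (h : IsPointedCurve k F res ord ev L t O fR S) (P : Pt) (hP : P ∉ S) (n : ℕ) :
    Submodule k (res P) :=
  LinearMap.range (h.evL (Finsupp.single O (n : ℤ)) P (Finsupp.single_eq_of_ne (h.ne_O hP)))

lemma mem_values (h : IsPointedCurve k F res ord ev L t O fR S) {P : Pt} {hP : P ∉ S} {n : ℕ}
    {x : res P} : x ∈ h.values P hP n ↔ ∃ l ∈ L (Finsupp.single O (n : ℤ)), ev P l = x :=
  ⟨fun ⟨l, hl⟩ => ⟨l, l.2, hl⟩, fun ⟨l, hl, hx⟩ => ⟨⟨l, hl⟩, hx⟩⟩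

lemma exists_units_of_mem_values (h : IsPointedCurve k F res ord ev L t O fR S) {P : Pt}
    {hP : P ∉ S} {n : ℕ} {x : res P} (hx : x ∈ h.values P hP n) (hx0 : x ≠ 0) :
    ∃ l : Fˣ, (l : F) ∈ L (Finsupp.single O (n : ℤ)) ∧ ev P (l : F) = x := by
  obtain ⟨l, hl, rfl⟩ := h.mem_values.1 hx
  exact ⟨Units.mk0 l fun h0 => hx0 (by rw [h0, h.ev_zero]), hl, rfl⟩

lemma L_single_mono (h : IsPointedCurve k F res ord ev L t O fR S) {m n : ℤ} (hmn : m ≤ n) :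
    L (Finsupp.single O m) ≤ L (Finsupp.single O n) :=
  h.L_mono (Finsupp.single_le_single.2 hmn)

lemma values_mono (h : IsPointedCurve k F res ord ev L t O fR S) {P : Pt} (hP : P ∉ S) :
    Monotone (h.values P hP) := fun m n hmn x hx => by
  obtain ⟨l, hl, hx⟩ := h.mem_values.1 hx
  exact h.mem_values.2 ⟨l, h.L_single_mono (by exact_mod_cast hmn) hl, hx⟩

lemma le_finrank_values (h : IsPointedCurve k F res ord ev L t O fR S) {P : Pt} (hP : P ∉ S)
    {w : ℕ} (hw : w + 1 = Module.finrank k (res P) ∨ w = 3 * t) {n : ℕ} (hn : n ≤ w) :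
    n + 1 ≤ Module.finrank k (h.values P hP n) + t := by
  have hinj : Function.Injective
      (h.evL (Finsupp.single O (n : ℤ)) P (Finsupp.single_eq_of_ne (h.ne_O hP))) :=
    fun x y hxy => Subtype.ext (h.eq_of_ev_eq hP hw
      (h.L_single_mono (by exact_mod_cast hn) x.2) (h.L_single_mono (by exact_mod_cast hn) y.2) hxy)
  have h1 := h.rr_ineq (Finsupp.single O (n : ℤ))
  rw [h.divDeg_single_O] at h1
  rw [values, LinearMap.finrank_range_of_inj hinj]
  omega

lemma exists_ev_eq_mul (h : IsPointedCurve k F res ord ev L t O fR S) {P : Pt} (hP : P ∉ S)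
    {w n : ℕ} (hw : w + 1 = Module.finrank k (res P) ∨ w = 3 * t) (hn : n ≤ w)
    (hne : Module.finrank k (res P) ≤ n + 1) {α : res P} (hα : α ≠ 0) :
    ∃ l m : Fˣ, (l : F) ∈ L (Finsupp.single O (n : ℤ)) ∧ (m : F) ∈ L (Finsupp.single O (n : ℤ)) ∧
      ev P (l : F) = α * ev P (m : F) := by
  have := h.finiteDimensional_res P
  have h1 := h.le_finrank_values hP hw hn
  have h2 := h.two_mul_genus_lt hP
  obtain ⟨c, hc0, hc, hc'⟩ := exists_common_multiplier₂ (k := k) (A := h.values P hP n)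
    (B := h.values P hP n) hα one_ne_zero (by omega)
  rw [one_mul] at hc'
  obtain ⟨l, hl, hlc⟩ := h.exists_units_of_mem_values hc (mul_ne_zero hα hc0)
  obtain ⟨m, hm, rfl⟩ := h.exists_units_of_mem_values hc' hc0
  exact ⟨l, m, hl, hm, hlc⟩

end IsPointedCurve

namespace IsPointedCurve

variable {k F : Type*} [Field k] [Field F] [Algebra k F]
  {Pt : Type*} {res : Pt → Type*} [∀ P, Field (res P)] [∀ P, Algebra k (res P)]
  {ord : Pt → F → ℤ} {ev : ∀ P, F → res P} {L : (Pt →₀ ℤ) → Submodule k F} {t : ℕ}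
  {O : Pt} {fR : Pt → Fˣ} {S : Set Pt}

lemma fR_mem_L (h : IsPointedCurve k F res ord ev L t O fR S) {Q : Pt} {D E : Pt →₀ ℤ}
    (hdv : h.dv (fR Q) = Finsupp.single Q 1 - D - E) : (fR Q : F) ∈ L (D + E) := by
  have : D + E + (Finsupp.single Q 1 - D - E) = Finsupp.single Q 1 := by abel
  rw [h.mem_L_iff_dv, hdv, this]
  exact Finsupp.single_nonneg.2 zero_le_one

/-- Modulo symbols of lower degree, `{fR P, x}` depends only on the value of `x` at `P`, among
sections `x` of a fixed divisor of degree less than `2 deg P`. -/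
lemma symbol_sub_symbol_mem_of_ev_eq (h : IsPointedCurve k F res ord ev L t O fR S) {P : Pt}
    (hP : P ∉ S) {x y : Fˣ}
    (hx : x ∈ unitFiltration k res L t O fR S (Module.finrank k (res P)))
    (hy : y ∈ unitFiltration k res L t O fR S (Module.finrank k (res P)))
    {X : Pt →₀ ℤ} (hxX : (x : F) ∈ L X) (hyX : (y : F) ∈ L X)
    (hX : divDeg k res X < 2 * Module.finrank k (res P)) (hX0 : ∀ R, R ∉ S → X R = 0)
    (hev : ev P (x : F) = ev P (y : F)) :
    symbol (fR P) x - symbol (fR P) y ∈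
      symbolSubgroup (unitFiltration k res L t O fR S (Module.finrank k (res P))) := by
  rcases eq_or_ne x y with rfl | hne
  · rw [sub_self]; exact AddSubgroup.zero_mem _
  obtain ⟨z, hz⟩ : ∃ z : Fˣ, (z : F) = x - y :=
    ⟨Units.mk0 _ (sub_ne_zero.2 (Units.val_injective.ne hne)), rfl⟩
  have hzX : (z : F) ∈ L X := hz ▸ Submodule.sub_mem _ hxX hyX
  have hz0 : ev P (z : F) = 0 := by rw [hz, h.ev_sub_of_mem_L (hX0 P hP) hxX hyX, hev, sub_self]
  have hzP : 0 < ord P (z : F) := (h.ev_eq_zero_iff P z z.ne_zero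
    (h.regular_of_mem_L (hX0 P hP) hzX z.ne_zero)).1 hz0
  have hzX' := h.mem_L_sub_single hzX (P := P) (by rw [hX0 P hP, zero_add]; exact hzP)
  refine symbol_sub_symbol_mem (h := z / fR P) (h.mem_unitFiltration fun R hR hRe => ?_) hx hy ?_
  · have h1 := h.add_ord_eq_zero hzX' (P := R) (by rw [divDeg_sub, divDeg_single]; omega)
    rw [Finsupp.sub_apply, hX0 R hR] at h1
    rw [h.ord_units_div]
    rcases eq_or_ne R P with rfl | hRP
    · rw [Finsupp.single_eq_same] at h1
      rw [h.ord_fR_self hR]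
      omega
    · rw [Finsupp.single_eq_of_ne hRP] at h1
      rw [h.ord_fR_of_ne hR hP hRP]
      omega
  · rw [← Units.val_mul, mul_div_cancel, hz]

/-- The map `l(P) ↦ {fR P, l}`, modulo symbols of lower degree, for `l` in a Riemann–Roch space
on which evaluation at `P` is injective. -/
lemma exists_symbol_of_value (h : IsPointedCurve k F res ord ev L t O fR S) {P : Pt}
    (hP : P ∉ S) {w : ℕ} (hw : w + 1 = Module.finrank k (res P) ∨ w = 3 * t)
    (A : AddSubgroup (K2 F)) :
    ∃ ψ : res P → K2 F ⧸ A, ∀ l : Fˣ, (l : F) ∈ L (Finsupp.single O (w : ℤ)) →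
      ψ (ev P (l : F)) = QuotientAddGroup.mk (symbol (fR P) l) := by
  classical
  refine ⟨fun α => if hα : ∃ l : Fˣ, (l : F) ∈ L (Finsupp.single O (w : ℤ)) ∧ ev P (l : F) = α
    then QuotientAddGroup.mk (symbol (fR P) hα.choose) else 0, fun l hl => ?_⟩
  have hα : ∃ l' : Fˣ, (l' : F) ∈ L (Finsupp.single O (w : ℤ)) ∧ ev P (l' : F) = ev P (l : F) :=
    ⟨l, hl, rfl⟩
  have hl' : hα.choose = l :=
    Units.ext (h.eq_of_ev_eq hP hw hα.choose_spec.1 hl hα.choose_spec.2)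
  simp only [dif_pos hα, hl']

lemma ord_nonneg_of_mem_unitFiltration (h : IsPointedCurve k F res ord ev L t O fR S) {P : Pt}
    (hP : P ∉ S) {x : Fˣ}
    (hx : x ∈ unitFiltration k res L t O fR S (Module.finrank k (res P))) :
    0 ≤ ord P (x : F) := (h.ord_eq_zero_of_mem_unitFiltration hx hP le_rfl).ge

/-- The map `v(P) ↦ {fR P, v}`, modulo symbols of lower degree, extends to a homomorphism on the
multiplicative group of `res P`. -/
lemma exists_lift_at (h : IsPointedCurve k F res ord ev L t O fR S) {P : Pt} (hP : P ∉ S) :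
    ∃ Φ : res P → K2 F ⧸
        symbolSubgroup (unitFiltration k res L t O fR S (Module.finrank k (res P))),
      (∀ α β, α ≠ 0 → β ≠ 0 → Φ (α * β) = Φ α + Φ β) ∧
      ∀ v ∈ unitFiltration k res L t O fR S (Module.finrank k (res P)),
        Φ (ev P (v : F)) = QuotientAddGroup.mk (symbol (fR P) v) := by
  have hfin := h.finiteDimensional_res P
  have hte := h.two_mul_genus_lt hP
  obtain ⟨w, hew, htw, hw⟩ : ∃ w : ℕ, Module.finrank k (res P) ≤ w + 1 ∧ 3 * t ≤ w ∧
      (w + 1 = Module.finrank k (res P) ∨ w = 3 * t) :=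
    ⟨max (Module.finrank k (res P) - 1) (3 * t), by omega, by omega, by omega⟩
  obtain ⟨ψ, hψ⟩ := h.exists_symbol_of_value hP hw
    (symbolSubgroup (unitFiltration k res L t O fR S (Module.finrank k (res P))))
  have hmem : ∀ {a : ℕ}, a ≤ w → ∀ {l : Fˣ}, (l : F) ∈ L (Finsupp.single O (a : ℤ)) →
      (l : F) ∈ L (Finsupp.single O (w : ℤ)) := fun ha l hl =>
    h.L_single_mono (by exact_mod_cast ha) hl
  have hreg : ∀ {a : ℕ} {l : Fˣ}, (l : F) ∈ L (Finsupp.single O (a : ℤ)) → 0 ≤ ord P (l : F) :=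
    fun hl => h.ord_nonneg_of_mem_L hl (h.ne_O hP)
  have hV : ∀ {l : Fˣ}, (l : F) ∈ L (Finsupp.single O (w : ℤ)) →
      l ∈ unitFiltration k res L t O fR S (Module.finrank k (res P)) :=
    fun hl => h.mem_unitFiltration_of_mem_L_of_lt hw hl
  obtain ⟨Φ, hΦ, hΦψ⟩ := exists_multiplicative_extension (k := k) rfl hte hew htw hw
    (h.values_mono hP) (fun n hn => h.le_finrank_values hP hw hn) ψ (by
      intro a b c d ha hb hc hd hab hcd x hx y hy x' hx' y' hy' hx0 hy0 hx0' hy0' hxy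
      obtain ⟨l, hl, rfl⟩ := h.exists_units_of_mem_values hx hx0
      obtain ⟨m, hm, rfl⟩ := h.exists_units_of_mem_values hy hy0
      obtain ⟨l', hl', rfl⟩ := h.exists_units_of_mem_values hx' hx0'
      obtain ⟨m', hm', rfl⟩ := h.exists_units_of_mem_values hy' hy0'
      rw [hψ l (hmem ha hl), hψ m (hmem hb hm), hψ l' (hmem hc hl'), hψ m' (hmem hd hm'),
        ← QuotientAddGroup.mk_add, ← QuotientAddGroup.mk_add, ← symbol_mul_right,
        ← symbol_mul_right, ← sub_eq_zero, ← QuotientAddGroup.mk_sub,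
        QuotientAddGroup.eq_zero_iff]
      have hprod : ∀ {i j : ℕ}, i + j < 2 * Module.finrank k (res P) → ∀ {p q : Fˣ},
          (p : F) ∈ L (Finsupp.single O (i : ℤ)) → (q : F) ∈ L (Finsupp.single O (j : ℤ)) →
          ((p * q : Fˣ) : F) ∈
            L (Finsupp.single O (2 * (Module.finrank k (res P) : ℤ) - 1)) := by
        intro i j hij p q hp hq
        have := h.mul_mem_L hp hq
        rw [← Finsupp.single_add] at this
        exact h.L_single_mono (by omega) this
      refine h.symbol_sub_symbol_mem_of_ev_eq hP
        (Subgroup.mul_mem _ (hV (hmem ha hl)) (hV (hmem hb hm)))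
        (Subgroup.mul_mem _ (hV (hmem hc hl')) (hV (hmem hd hm')))
        (hprod hab hl hm) (hprod hcd hl' hm') ?_
        (fun R hR => Finsupp.single_eq_of_ne (h.ne_O hR)) ?_
      · rw [h.divDeg_single_O]; omega
      · rw [h.ev_units_mul (hreg hl) (hreg hm), h.ev_units_mul (hreg hl') (hreg hm'), hxy])
  have hone : ((1 : Fˣ) : F) ∈ L (Finsupp.single O (w : ℤ)) :=
    h.one_mem_L (Finsupp.single_nonneg.2 (by omega))
  have hne : ∀ {v : Fˣ}, v ∈ unitFiltration k res L t O fR S (Module.finrank k (res P)) →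
      ev P (v : F) ≠ 0 := fun hv =>
    h.ev_units_ne_zero (h.ord_eq_zero_of_mem_unitFiltration hv hP le_rfl)
  have hval : ∀ {l : Fˣ}, (l : F) ∈ L (Finsupp.single O (w : ℤ)) →
      ev P (l : F) ∈ h.values P hP w := fun hl => h.mem_values.2 ⟨_, hl, rfl⟩
  have hdiv : ∀ {l m : Fˣ}, (l : F) ∈ L (Finsupp.single O (w : ℤ)) →
      (m : F) ∈ L (Finsupp.single O (w : ℤ)) → Φ (ev P (l : F) / ev P (m : F)) =
        QuotientAddGroup.mk (symbol (fR P) l) - QuotientAddGroup.mk (symbol (fR P) m) := by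
    intro l m hl hm
    rw [hΦψ _ (hval hl) _ (hval hm) (hne (hV hl)) (hne (hV hm)), hψ l hl, hψ m hm]
  have hΦ1 : Φ 1 = 0 := by
    have := hΦ 1 1 one_ne_zero one_ne_zero
    rwa [mul_one, left_eq_add] at this
  refine ⟨Φ, hΦ, fun v hv => ?_⟩
  induction hv using Subgroup.closure_induction with
  | mem v hv =>
    rcases hv with hv | ⟨Q, hQ, hQe, rfl⟩
    · have hvw : (v : F) ∈ L (Finsupp.single O (w : ℤ)) :=
        h.L_single_mono (by exact_mod_cast htw) hv
      have := hdiv hvw hone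
      rwa [Units.val_one, h.ev_one, div_one, symbol_one_right, QuotientAddGroup.mk_zero,
        sub_zero] at this
    · have hQV : fR Q ∈ unitFiltration k res L t O fR S (Module.finrank k (res P)) :=
        Subgroup.subset_closure (Or.inr ⟨Q, hQ, hQe, rfl⟩)
      obtain ⟨n, hn⟩ : ∃ n, n + 1 = Module.finrank k (res P) :=
        ⟨Module.finrank k (res P) - 1, by omega⟩
      obtain ⟨l, m, hl, hm, hlm⟩ := h.exists_ev_eq_mul hP hw (n := n) (by omega) hn.ge (hne hQV)
      have hlw := hmem (by omega) hl
      have hmw := hmem (by omega) hm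
      obtain ⟨D, hD, hDt, hdv⟩ := h.exists_dv_fR hQ
      have hfQ := h.fR_mem_L hdv
      have hlX : (l : F) ∈ L (D + Finsupp.single O ((Module.finrank k (res Q) : ℤ) - t) +
          Finsupp.single O (n : ℤ)) := by
        refine h.L_mono (le_add_of_nonneg_left (add_nonneg hD (Finsupp.single_nonneg.2 ?_))) hl
        have := h.two_mul_genus_lt hQ
        omega
      have h1 := h.symbol_sub_symbol_mem_of_ev_eq hP (Subgroup.mul_mem _ hQV (hV hmw)) (hV hlw)
        (h.mul_mem_L hfQ hm) hlX
        (by rw [divDeg_add, divDeg_add, hDt, h.divDeg_single_O, h.divDeg_single_O]; omega)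
        (fun R hR => by
          rw [Finsupp.add_apply, Finsupp.add_apply, h.eq_zero_of_divDeg_eq hD hDt hR,
            Finsupp.single_eq_of_ne (h.ne_O hR), Finsupp.single_eq_of_ne (h.ne_O hR)]; rfl)
        (by rw [h.ev_units_mul (h.ord_nonneg_of_mem_unitFiltration hP hQV) (hreg hm), hlm])
      rw [← QuotientAddGroup.eq_zero_iff, QuotientAddGroup.mk_sub, symbol_mul_right,
        QuotientAddGroup.mk_add] at h1
      have h2 := hdiv hlw hmw
      rw [hlm, mul_div_cancel_right₀ _ (hne (hV hmw))] at h2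
      rw [h2, ← sub_eq_zero, ← neg_zero, ← h1]
      abel
  | one => rw [Units.val_one, h.ev_one, hΦ1, symbol_one_right, QuotientAddGroup.mk_zero]
  | mul x y hx hy h1 h2 =>
    rw [h.ev_units_mul (h.ord_nonneg_of_mem_unitFiltration hP hx)
      (h.ord_nonneg_of_mem_unitFiltration hP hy), hΦ _ _ (hne hx) (hne hy), h1, h2,
      symbol_mul_right, QuotientAddGroup.mk_add]
  | inv x hx h1 =>
    have h2 := hΦ _ _ (inv_ne_zero (hne hx)) (hne hx)
    rw [inv_mul_cancel₀ (hne hx), hΦ1, h1] at h2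
    rw [h.ev_units_inv (h.ord_eq_zero_of_mem_unitFiltration hx hP le_rfl), symbol_inv_right,
      QuotientAddGroup.mk_neg]
    exact eq_neg_of_add_eq_zero_left h2.symm

end IsPointedCurve

namespace IsPointedCurve

variable {k F : Type*} [Field k] [Field F] [Algebra k F]
  {Pt : Type*} {res : Pt → Type*} [∀ P, Field (res P)] [∀ P, Algebra k (res P)]
  {ord : Pt → F → ℤ} {ev : ∀ P, F → res P} {L : (Pt →₀ ℤ) → Submodule k F} {t : ℕ}
  {O : Pt} {fR : Pt → Fˣ} {S : Set Pt}

lemma exists_linear_relation (h : IsPointedCurve k F res ord ev L t O fR S) {f g : F}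
    {D E M N : Pt →₀ ℤ} (hf : ∀ a ∈ L D, a * f ∈ L N) (hg : ∀ b ∈ L E, b * g ∈ L N)
    (hMN : M ≤ N) (hN : 2 * (t : ℤ) - 2 < divDeg k res N)
    (hdeg : divDeg k res N + 2 * t < divDeg k res D + divDeg k res E + divDeg k res M + 2) :
    ∃ a ∈ L D, ∃ b ∈ L E, ∃ c ∈ L M, a * f + b * g = c ∧ (a ≠ 0 ∨ b ≠ 0 ∨ c ≠ 0) := by
  have := h.finiteDimensional_L D
  have := h.finiteDimensional_L E
  have := h.finiteDimensional_L M
  have := h.finiteDimensional_L N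
  let φ : (L D × L E) × L M →ₗ[k] L N :=
    (((LinearMap.mulRight k f).restrict hf).coprod
      ((LinearMap.mulRight k g).restrict hg)).coprod (-Submodule.inclusion (h.L_mono hMN))
  have hker : LinearMap.ker φ ≠ ⊥ := by
    refine LinearMap.ker_ne_bot_of_finrank_lt ?_
    rw [Module.finrank_prod, Module.finrank_prod]
    have h1 := h.rr_ineq D
    have h2 := h.rr_ineq E
    have h3 := h.rr_ineq M
    have h4 := h.rr_eq N hN
    omega
  obtain ⟨⟨⟨a, b⟩, c⟩, hφ, h0⟩ := Submodule.exists_mem_ne_zero_of_ne_bot hker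
  refine ⟨a, a.2, b, b.2, c, c.2, ?_, ?_⟩
  · have := congrArg (Subtype.val) (LinearMap.mem_ker.1 hφ)
    simp only [φ, LinearMap.coprod_apply, LinearMap.neg_apply, ← sub_eq_add_neg] at this
    exact sub_eq_zero.1 this
  · by_contra! hall
    refine h0 ?_
    simp only [Prod.mk_eq_zero]
    exact ⟨⟨Subtype.ext hall.1, Subtype.ext hall.2.1⟩, Subtype.ext hall.2.2⟩

lemma symbol_fR_fR (h : IsPointedCurve k F res ord ev L t O fR S) {P Q : Pt} (hP : P ∉ S)
    (hQ : Q ∉ S) (hPQ : P ≠ Q) {e : ℕ} (hPe : Module.finrank k (res P) = e)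
    (hQe : Module.finrank k (res Q) = e) :
    ∃ x ∈ unitFiltration k res L t O fR S e, ∃ y ∈ unitFiltration k res L t O fR S e,
      symbol (fR P) (fR Q) = symbol (fR Q) x - symbol (fR P) y - symbol x y := by
  have hte := h.two_mul_genus_lt hP
  obtain ⟨D, hD, hDt, hdv⟩ := h.exists_dv_fR hP
  obtain ⟨E, hE, hEt, hdvE⟩ := h.exists_dv_fR hQ
  rw [hPe] at hdv hte
  rw [hQe] at hdvE
  have hmul : ∀ {X : Pt →₀ ℤ} {f : F}, f ∈ L (X + Finsupp.single O ((e : ℤ) - t)) →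
      ∀ a ∈ L (Finsupp.single O (3 * t : ℤ) - X),
        a * f ∈ L (Finsupp.single O ((e : ℤ) + 2 * t)) := by
    intro X f hf a ha
    have := h.mul_mem_L ha hf
    rwa [add_comm X, sub_add_add_cancel, ← Finsupp.single_add,
      show (3 * t : ℤ) + ((e : ℤ) - t) = (e : ℤ) + 2 * t by ring] at this
  obtain ⟨a, ha, b, hb, c, hc, hrel, h0⟩ := h.exists_linear_relation (hmul (h.fR_mem_L hdv))
    (hmul (h.fR_mem_L hdvE)) (M := Finsupp.single O ((e : ℤ) - 1))
    (Finsupp.single_le_single.2 (by omega)) (by rw [h.divDeg_single_O]; omega)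
    (by
      rw [divDeg_sub, divDeg_sub, h.divDeg_single_O, h.divDeg_single_O, h.divDeg_single_O, hDt,
        hEt]
      omega)
  have ha3 := h.L_mono (sub_le_self _ hD) ha
  have hb3 := h.L_mono (sub_le_self _ hE) hb
  have hordO : ∀ {f : F}, f ≠ 0 → f ∈ L (Finsupp.single O (3 * t : ℤ)) → ∀ {R : Pt}, R ∉ S →
      ord R f = 0 := fun hf0 hf R hR => h.ord_eq_zero_of_mem_L (f := Units.mk0 _ hf0) hf hR
  have hcV : ∀ hc0 : c ≠ 0, Units.mk0 c hc0 ∈ unitFiltration k res L t O fR S e := fun hc0 => by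
    refine h.mem_unitFiltration_of_mem_L_of_lt (w := e - 1) (by omega) ?_
    rwa [Nat.cast_sub (by omega), Nat.cast_one]
  have hcne : ∀ {f : F} {R : Pt}, R ∉ S → Module.finrank k (res R) = e → f ≠ 0 →
      f ∈ L (Finsupp.single O (3 * t : ℤ)) → f * fR R ≠ c := by
    rintro f R hR hRe hf0 hf rfl
    have := h.ord_eq_zero_of_mem_unitFiltration (hcV (mul_ne_zero hf0 (fR R).ne_zero)) hR hRe.ge
    rw [Units.val_mk0, h.ord_mul _ _ _ hf0 (fR R).ne_zero, h.ord_fR_self hR, hordO hf0 hf hR]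
      at this
    omega
  have hb0 : b ≠ 0 := by
    rintro rfl
    rw [zero_mul, add_zero] at hrel
    by_cases ha0 : a = 0
    · rw [ha0, zero_mul] at hrel
      simp [ha0, hrel.symm] at h0
    · exact hcne hP hPe ha0 ha3 hrel
  have ha0 : a ≠ 0 := by
    rintro rfl
    rw [zero_mul, zero_add] at hrel
    exact hcne hQ hQe hb0 hb3 hrel
  have hc0 : c ≠ 0 := by
    rintro rfl
    have h1 := congrArg (ord P) (eq_neg_of_add_eq_zero_left hrel)
    rw [← neg_mul, h.ord_mul _ _ _ ha0 (fR P).ne_zero,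
      h.ord_mul _ _ _ (neg_ne_zero.2 hb0) (fR Q).ne_zero, h.ord_fR_self hP,
      h.ord_fR_of_ne hP hQ hPQ, hordO ha0 ha3 hP,
      hordO (neg_ne_zero.2 hb0) (Submodule.neg_mem _ hb3) hP] at h1
    omega
  obtain ⟨a, rfl⟩ : ∃ u : Fˣ, (u : F) = a := ⟨Units.mk0 a ha0, rfl⟩
  obtain ⟨b, rfl⟩ : ∃ u : Fˣ, (u : F) = b := ⟨Units.mk0 b hb0, rfl⟩
  have hcV := hcV hc0
  obtain ⟨c, rfl⟩ : ∃ u : Fˣ, (u : F) = c := ⟨Units.mk0 c hc0, rfl⟩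
  rw [Units.mk0_val] at hcV
  refine ⟨a / c, Subgroup.div_mem _ (mem_unitFiltration_of_mem_L e a ha3) hcV, b / c,
    Subgroup.div_mem _ (mem_unitFiltration_of_mem_L e b hb3) hcV, ?_⟩
  have h1 : symbol (a * fR P / c) (b * fR Q / c) = 0 :=
    symbol_div_div_eq_zero (by rw [Units.val_mul, Units.val_mul, hrel])
  rw [mul_div_right_comm, mul_div_right_comm, symbol_mul_left, symbol_mul_right,
    symbol_mul_right, symbol_swap (a / c) (fR Q)] at h1
  rw [← sub_eq_zero, ← h1]
  abel

/-- The subgroup generated by the symbols of degree less than `e` and the `{fR P, v}` with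
`P ∉ S` of degree `e` and `v ∈ V_e` contains all symbols of degree at most `e`. -/
lemma symbolSubgroup_succ_le (h : IsPointedCurve k F res ord ev L t O fR S) (e : ℕ) :
    symbolSubgroup (unitFiltration k res L t O fR S (e + 1)) ≤
      symbolSubgroup (unitFiltration k res L t O fR S e) ⊔
        AddSubgroup.closure {x | ∃ P, P ∉ S ∧ Module.finrank k (res P) = e ∧
          ∃ v ∈ unitFiltration k res L t O fR S e, x = symbol (fR P) v} := by
  set B := symbolSubgroup (unitFiltration k res L t O fR S e) ⊔
    AddSubgroup.closure {x | ∃ P, P ∉ S ∧ Module.finrank k (res P) = e ∧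
      ∃ v ∈ unitFiltration k res L t O fR S e, x = symbol (fR P) v}
  have hA : ∀ {x y}, x ∈ unitFiltration k res L t O fR S e →
      y ∈ unitFiltration k res L t O fR S e → symbol x y ∈ B := fun hx hy =>
    AddSubgroup.mem_sup_left (symbol_mem_symbolSubgroup hx hy)
  have hG : ∀ {P v}, P ∉ S → Module.finrank k (res P) = e →
      v ∈ unitFiltration k res L t O fR S e → symbol (fR P) v ∈ B := fun hP hPe hv =>
    AddSubgroup.mem_sup_right (AddSubgroup.subset_closure ⟨_, hP, hPe, _, hv, rfl⟩)
  have hneg : (-1 : Fˣ) ∈ unitFiltration k res L t O fR S e :=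
    h.mem_unitFiltration fun P _ _ => by rw [Units.val_neg, Units.val_one, h.ord_neg_one]
  have hgen : ∀ f ∈ ({l | (l : F) ∈ L (Finsupp.single O (3 * t : ℤ))} ∪
      {f | ∃ Q, Q ∉ S ∧ Module.finrank k (res Q) < e + 1 ∧ f = fR Q} : Set Fˣ),
      f ∈ unitFiltration k res L t O fR S e ∨
        ∃ P, P ∉ S ∧ Module.finrank k (res P) = e ∧ f = fR P := by
    rintro f (hf | ⟨Q, hQ, hQe, rfl⟩)
    · exact Or.inl (mem_unitFiltration_of_mem_L e f hf)
    · rcases Nat.lt_succ_iff_lt_or_eq.1 hQe with hlt | heq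
      · exact Or.inl (Subgroup.subset_closure (Or.inr ⟨Q, hQ, hlt, rfl⟩))
      · exact Or.inr ⟨Q, hQ, heq, rfl⟩
  refine symbolSubgroup_closure_le fun f hf g hg => ?_
  rcases hgen f hf with hf | ⟨P, hP, hPe, rfl⟩ <;> rcases hgen g hg with hg | ⟨Q, hQ, hQe, rfl⟩
  · exact hA hf hg
  · rw [symbol_swap]
    exact B.neg_mem (hG hQ hQe hf)
  · exact hG hP hPe hg
  · rcases eq_or_ne P Q with rfl | hPQ
    · rw [symbol_self]
      exact hG hP hPe hneg
    · obtain ⟨x, hx, y, hy, heq⟩ := h.symbol_fR_fR hP hQ hPQ hPe hQe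
      rw [heq]
      exact B.sub_mem (B.sub_mem (hG hQ hQe hx) (hG hP hPe hy)) (hA hx hy)

end IsPointedCurve

namespace IsPointedCurve

variable {k F : Type*} [Field k] [Field F] [Algebra k F]
  {Pt : Type*} {res : Pt → Type*} [∀ P, Field (res P)] [∀ P, Algebra k (res P)]
  {ord : Pt → F → ℤ} {ev : ∀ P, F → res P} {L : (Pt →₀ ℤ) → Submodule k F} {t : ℕ}
  {O : Pt} {fR : Pt → Fˣ} {S : Set Pt} {T : K2 F →+ Π₀ P : Pt, Additive ((res P)ˣ)}

lemma tame_eq_zero (h : IsPointedCurve k F res ord ev L t O fR S) (hT : IsTameSymbol ord ev T)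
    {f g : Fˣ} {P : Pt} (hf : ord P (f : F) = 0) (hg : ord P (g : F) = 0) :
    T (symbol f g) P = 0 := by
  apply Additive.toMul.injective
  apply Units.ext
  rw [hT f g P, hf, hg]
  simp [h.ev_one]

lemma tame_of_ord_eq_one (h : IsPointedCurve k F res ord ev L t O fR S)
    (hT : IsTameSymbol ord ev T) {f v : Fˣ} {P : Pt} (hf : ord P (f : F) = 1)
    (hv : ord P (v : F) = 0) :
    ((Additive.toMul (T (symbol f v) P) : (res P)ˣ) : res P) = (ev P (v : F))⁻¹ := by
  rw [hT f v P, hf, hv, ← h.ev_units_inv hv]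
  simp

lemma tame_symbol_fR_of_ne (h : IsPointedCurve k F res ord ev L t O fR S)
    (hT : IsTameSymbol ord ev T) {e : ℕ} {P Q : Pt} (hP : P ∉ S) (hQ : Q ∉ S) (hQP : Q ≠ P)
    (hQe : e ≤ Module.finrank k (res Q)) {v : Fˣ} (hv : v ∈ unitFiltration k res L t O fR S e) :
    T (symbol (fR P) v) Q = 0 :=
  h.tame_eq_zero hT (h.ord_fR_of_ne hQ hP hQP) (h.ord_eq_zero_of_mem_unitFiltration hv hQ hQe)

lemma tame_eq_zero_of_mem (h : IsPointedCurve k F res ord ev L t O fR S)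
    (hT : IsTameSymbol ord ev T) {e : ℕ} {x : K2 F}
    (hx : x ∈ symbolSubgroup (unitFiltration k res L t O fR S e)) {P : Pt} (hP : P ∉ S)
    (hPe : e ≤ Module.finrank k (res P)) : T x P = 0 := by
  induction hx using AddSubgroup.closure_induction with
  | mem x hx =>
    obtain ⟨a, ha, b, hb, rfl⟩ := hx
    exact h.tame_eq_zero hT (h.ord_eq_zero_of_mem_unitFiltration ha hP hPe)
      (h.ord_eq_zero_of_mem_unitFiltration hb hP hPe)
  | zero => rw [map_zero, DFinsupp.zero_apply]
  | add x y _ _ hx hy => rw [map_add, DFinsupp.add_apply, hx, hy, add_zero]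
  | neg x _ hx => rw [map_neg, DFinsupp.neg_apply, hx, neg_zero]

lemma exists_tame_section_at (h : IsPointedCurve k F res ord ev L t O fR S)
    (hT : IsTameSymbol ord ev T) {P : Pt} (hP : P ∉ S) {e : ℕ}
    (hPe : Module.finrank k (res P) = e) :
    ∃ Φ : Additive (res P)ˣ →+ K2 F ⧸ symbolSubgroup (unitFiltration k res L t O fR S e),
      ∀ v ∈ unitFiltration k res L t O fR S e,
        Φ (T (symbol (fR P) v) P) = QuotientAddGroup.mk (symbol (fR P) v) := by
  subst hPe
  obtain ⟨Φ, hΦ, hΦv⟩ := h.exists_lift_at hP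
  refine ⟨-AddMonoidHom.mk' (fun u => Φ (Additive.toMul u : (res P)ˣ)) (fun u v => ?_),
    fun v hv => ?_⟩
  · rw [toMul_add, Units.val_mul, hΦ _ _ (Units.ne_zero _) (Units.ne_zero _)]
  · have hv0 := h.ord_eq_zero_of_mem_unitFiltration hv hP le_rfl
    rw [AddMonoidHom.neg_apply, AddMonoidHom.mk'_apply,
      h.tame_of_ord_eq_one hT (h.ord_fR_self hP) hv0, ← h.ev_units_inv hv0,
      hΦv _ (Subgroup.inv_mem _ hv), symbol_inv_right, QuotientAddGroup.mk_neg, neg_neg]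

/-- A symbol of degree at most `e` whose tame symbols at the points of degree `e` outside `S` are
trivial is a symbol of degree less than `e`. -/
lemma mem_of_mem_succ (h : IsPointedCurve k F res ord ev L t O fR S)
    (hT : IsTameSymbol ord ev T) {e : ℕ} {x : K2 F}
    (hx : x ∈ symbolSubgroup (unitFiltration k res L t O fR S (e + 1)))
    (hTx : ∀ P, P ∉ S → Module.finrank k (res P) = e → T x P = 0) :
    x ∈ symbolSubgroup (unitFiltration k res L t O fR S e) := by
  classical
  have hex : ∀ P, ∃ Φ : Additive (res P)ˣ →+
      K2 F ⧸ symbolSubgroup (unitFiltration k res L t O fR S e),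
      (¬ (P ∉ S ∧ Module.finrank k (res P) = e) → Φ = 0) ∧
      (P ∉ S → Module.finrank k (res P) = e → ∀ v ∈ unitFiltration k res L t O fR S e,
        Φ (T (symbol (fR P) v) P) = QuotientAddGroup.mk (symbol (fR P) v)) := by
    intro P
    by_cases hP : P ∉ S ∧ Module.finrank k (res P) = e
    · obtain ⟨Φ, hΦ⟩ := h.exists_tame_section_at hT hP.1 hP.2
      exact ⟨Φ, fun hn => absurd hP hn, fun _ _ => hΦ⟩
    · exact ⟨0, fun _ => rfl, fun h1 h2 => absurd ⟨h1, h2⟩ hP⟩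
  choose Φ hΦ0 hΦ using hex
  have hzero : ∀ y : Π₀ P : Pt, Additive ((res P)ˣ),
      (∀ P, P ∉ S → Module.finrank k (res P) = e → y P = 0) → DFinsupp.sumAddHom Φ y = 0 := by
    intro y hy
    rw [DFinsupp.sumAddHom_apply]
    refine Finset.sum_eq_zero fun P _ => show Φ P (y P) = 0 from ?_
    by_cases hP : P ∉ S ∧ Module.finrank k (res P) = e
    · rw [hy P hP.1 hP.2, map_zero]
    · rw [hΦ0 P hP, AddMonoidHom.zero_apply]
  have hmk : ∀ z ∈ symbolSubgroup (unitFiltration k res L t O fR S e) ⊔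
        AddSubgroup.closure {x | ∃ P, P ∉ S ∧ Module.finrank k (res P) = e ∧
          ∃ v ∈ unitFiltration k res L t O fR S e, x = symbol (fR P) v},
      z ∈ ((QuotientAddGroup.mk' _ : K2 F →+ K2 F ⧸
        symbolSubgroup (unitFiltration k res L t O fR S e))).eqLocus
          ((DFinsupp.sumAddHom Φ).comp T) := by
    rw [← SetLike.le_def, sup_le_iff, AddSubgroup.closure_le]
    refine ⟨fun z hz => ?_, ?_⟩
    · refine ((QuotientAddGroup.eq_zero_iff z).2 hz).trans (hzero _ fun P hP hPe => ?_).symm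
      exact h.tame_eq_zero_of_mem hT hz hP hPe.ge
    · rintro _ ⟨P, hP, hPe, v, hv, rfl⟩
      refine (hΦ P hP hPe v hv).symm.trans ?_
      rw [AddMonoidHom.comp_apply, ← sub_add_cancel (T (symbol (fR P) v))
        (DFinsupp.single P (T (symbol (fR P) v) P)), map_add, DFinsupp.sumAddHom_single,
        hzero, zero_add]
      · rw [sub_add_cancel]
      · intro Q hQ hQe
        rcases eq_or_ne Q P with rfl | hQP
        · rw [DFinsupp.sub_apply, DFinsupp.single_eq_same, sub_self]
        · rw [DFinsupp.sub_apply, DFinsupp.single_eq_of_ne hQP,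
            h.tame_symbol_fR_of_ne hT hP hQ hQP hQe.ge hv, sub_zero]
  rw [← QuotientAddGroup.eq_zero_iff]
  exact (hmk x (h.symbolSubgroup_succ_le e hx)).trans (hzero _ hTx)

lemma exists_mem_unitFiltration (h : IsPointedCurve k F res ord ev L t O fR S) (f : Fˣ) :
    ∃ m, f ∈ unitFiltration k res L t O fR S m := by
  refine ⟨(h.dv f).support.sup (fun P => Module.finrank k (res P)) + 1,
    h.mem_unitFiltration fun P _ hP => ?_⟩
  by_contra h0
  have := Finset.le_sup (f := fun P => Module.finrank k (res P))
    (Finsupp.mem_support_iff.2 h0 : P ∈ (h.dv f).support)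
  omega

lemma exists_mem_symbolSubgroup (h : IsPointedCurve k F res ord ev L t O fR S) (x : K2 F) :
    ∃ m, x ∈ symbolSubgroup (unitFiltration k res L t O fR S m) := by
  obtain ⟨x, rfl⟩ := Submodule.Quotient.mk_surjective _ x
  induction x using TensorProduct.induction_on with
  | zero => exact ⟨0, AddSubgroup.zero_mem _⟩
  | tmul a b =>
    obtain ⟨m, hm⟩ := h.exists_mem_unitFiltration a.toMul
    obtain ⟨n, hn⟩ := h.exists_mem_unitFiltration b.toMul
    exact ⟨max m n, symbol_mem_symbolSubgroup (unitFiltration_mono (le_max_left m n) hm)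
      (unitFiltration_mono (le_max_right m n) hn)⟩
  | add x y hx hy =>
    obtain ⟨m, hm⟩ := hx
    obtain ⟨n, hn⟩ := hy
    exact ⟨max m n, AddSubgroup.add_mem _
      (symbolSubgroup_mono (unitFiltration_mono (le_max_left m n)) hm)
      (symbolSubgroup_mono (unitFiltration_mono (le_max_right m n)) hn)⟩

lemma mem_symbolSubgroup_iff (h : IsPointedCurve k F res ord ev L t O fR S)
    (hT : IsTameSymbol ord ev T) {e : ℕ} {x : K2 F} :
    x ∈ symbolSubgroup (unitFiltration k res L t O fR S e) ↔
      ∀ P, P ∉ S → e ≤ Module.finrank k (res P) → T x P = 0 := by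
  refine ⟨fun hx P hP hPe => h.tame_eq_zero_of_mem hT hx hP hPe, fun hTx => ?_⟩
  obtain ⟨m, hm⟩ := h.exists_mem_symbolSubgroup x
  have hdown : ∀ n, x ∈ symbolSubgroup (unitFiltration k res L t O fR S (e + n)) →
      x ∈ symbolSubgroup (unitFiltration k res L t O fR S e) := by
    intro n
    induction n with
    | zero => exact id
    | succ n ih =>
      intro hx
      exact ih (h.mem_of_mem_succ hT hx fun P hP hPe => hTx P hP (by omega))
  exact hdown m (symbolSubgroup_mono (unitFiltration_mono (by omega)) hm)

lemma exists_tame_symbol_eq (h : IsPointedCurve k F res ord ev L t O fR S)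
    (hT : IsTameSymbol ord ev T) {P : Pt} (hP : P ∉ S) {w : ℕ}
    (hw : w + 1 = Module.finrank k (res P) ∨ w = 3 * t)
    (hPw : Module.finrank k (res P) ≤ w + 1) (α : Additive (res P)ˣ) :
    ∃ l m : Fˣ, (l : F) ∈ L (Finsupp.single O (w : ℤ)) ∧
      (m : F) ∈ L (Finsupp.single O (w : ℤ)) ∧ T (symbol (fR P) (l / m)) P = α := by
  obtain ⟨m, l, hm, hl, hml⟩ := h.exists_ev_eq_mul hP hw le_rfl hPw (Units.ne_zero α.toMul)
  refine ⟨l, m, hl, hm, ?_⟩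
  have hl0 := h.ord_eq_zero_of_mem_unitFiltration (h.mem_unitFiltration_of_mem_L_of_lt hw hl) hP
    le_rfl
  have hm0 := h.ord_eq_zero_of_mem_unitFiltration (h.mem_unitFiltration_of_mem_L_of_lt hw hm) hP
    le_rfl
  have hv0 : ord P ((l / m : Fˣ) : F) = 0 := by rw [h.ord_units_div, hl0, hm0, sub_self]
  apply Additive.toMul.injective
  apply Units.ext
  rw [h.tame_of_ord_eq_one hT (h.ord_fR_self hP) hv0, ← h.ev_units_inv hv0, inv_div,
    div_eq_mul_inv, h.ev_units_mul hm0.ge (by rw [h.ord_units_inv, hl0, neg_zero]),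
    h.ev_units_inv hl0, hml, mul_inv_cancel_right₀ (h.ev_units_ne_zero hl0)]

lemma exists_tame_eq_of_finrank_eq (h : IsPointedCurve k F res ord ev L t O fR S)
    (hT : IsTameSymbol ord ev T) {e w : ℕ} (hw : w + 1 = e ∨ w = 3 * t) (hew : e ≤ w + 1)
    (y : Π₀ P : Pt, Additive ((res P)ˣ)) :
    ∃ x ∈ AddSubgroup.closure {x | ∃ (P : Pt) (l : Fˣ), P ∉ S ∧ Module.finrank k (res P) = e ∧
        (l : F) ∈ L (Finsupp.single O (w : ℤ)) ∧ x = symbol (fR P) l},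
      ∀ P, P ∉ S → Module.finrank k (res P) = e → T x P = y P := by
  classical
  induction y using DFinsupp.induction with
  | h0 => exact ⟨0, AddSubgroup.zero_mem _, fun P _ _ => by rw [map_zero]⟩
  | ha P α y hy _ ih =>
    obtain ⟨x, hx, hTx⟩ := ih
    by_cases hP : P ∉ S ∧ Module.finrank k (res P) = e
    · obtain ⟨l, m, hl, hm, hlm⟩ := h.exists_tame_symbol_eq hT hP.1 (by rwa [hP.2])
        (by rwa [hP.2]) α
      refine ⟨symbol (fR P) (l / m) + x, AddSubgroup.add_mem _ ?_ hx, fun Q hQ hQe => ?_⟩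
      · rw [symbol_div_right]
        exact AddSubgroup.sub_mem _ (AddSubgroup.subset_closure ⟨P, l, hP.1, hP.2, hl, rfl⟩)
          (AddSubgroup.subset_closure ⟨P, m, hP.1, hP.2, hm, rfl⟩)
      · rw [map_add, DFinsupp.add_apply, DFinsupp.add_apply, hTx Q hQ hQe]
        rcases eq_or_ne Q P with rfl | hQP
        · rw [hlm, DFinsupp.single_eq_same]
        · rw [DFinsupp.single_eq_of_ne hQP, h.tame_symbol_fR_of_ne hT hP.1 hQ hQP hQe.ge
            (Subgroup.div_mem _ (h.mem_unitFiltration_of_mem_L_of_lt hw hl)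
              (h.mem_unitFiltration_of_mem_L_of_lt hw hm))]
    · refine ⟨x, hx, fun Q hQ hQe => ?_⟩
      rw [DFinsupp.add_apply, DFinsupp.single_eq_of_ne (by rintro rfl; exact hP ⟨hQ, hQe⟩),
        zero_add, hTx Q hQ hQe]

lemma exists_tame_eq (h : IsPointedCurve k F res ord ev L t O fR S)
    (hT : IsTameSymbol ord ev T) (y : Π₀ P : Pt, Additive ((res P)ˣ)) :
    ∃ x : K2 F, ∀ P, P ∉ S → T x P = y P := by
  classical
  have hind : ∀ (n : ℕ) (y : Π₀ P : Pt, Additive ((res P)ˣ)),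
      (∀ P, P ∉ S → n ≤ Module.finrank k (res P) → y P = 0) →
        ∃ x : K2 F, ∀ P, P ∉ S → T x P = y P := by
    intro n
    induction n with
    | zero => exact fun y hy => ⟨0, fun P hP => by
        rw [map_zero, hy P hP (Nat.zero_le _), DFinsupp.zero_apply]⟩
    | succ n ih =>
      intro y hy
      obtain ⟨w, hnw, hw⟩ : ∃ w : ℕ, n ≤ w + 1 ∧ (w + 1 = n ∨ w = 3 * t) :=
        ⟨max (n - 1) (3 * t), by omega, by omega⟩
      obtain ⟨x, hx, hTx⟩ := h.exists_tame_eq_of_finrank_eq hT hw hnw y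
      have hxA : x ∈ symbolSubgroup (unitFiltration k res L t O fR S (n + 1)) := by
        refine (AddSubgroup.closure_le _).2 ?_ hx
        rintro _ ⟨P, l, hP, hPn, hl, rfl⟩
        exact symbol_mem_symbolSubgroup
          (Subgroup.subset_closure (Or.inr ⟨P, hP, by omega, rfl⟩))
          (unitFiltration_mono (Nat.le_succ n) (h.mem_unitFiltration_of_mem_L_of_lt hw hl))
      obtain ⟨x', hx'⟩ := ih (y - T x) (fun P hP hPn => by
        rw [DFinsupp.sub_apply]
        rcases hPn.eq_or_lt with heq | hlt
        · rw [hTx P hP heq.symm, sub_self]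
        · rw [hy P hP hlt, h.tame_eq_zero_of_mem hT hxA hP hlt, sub_zero])
      refine ⟨x' + x, fun P hP => ?_⟩
      rw [map_add, DFinsupp.add_apply, hx' P hP, DFinsupp.sub_apply, sub_add_cancel]
  refine hind (y.support.sup (fun P => Module.finrank k (res P)) + 1) y fun P _ hP => ?_
  by_contra h0
  have := Finset.le_sup (f := fun P => Module.finrank k (res P)) (DFinsupp.mem_support_iff.2 h0)
  omega

lemma Fsub'_le (d : ℕ) :
    Fsub' k res L O t fR S d ≤ symbolSubgroup (unitFiltration k res L t O fR S (d + 1)) := by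
  refine sup_le ((AddSubgroup.closure_le _).2 ?_) ((AddSubgroup.closure_le _).2 ?_)
  · rintro _ ⟨l, m, hl, hm, rfl⟩
    exact symbol_mem_symbolSubgroup (mem_unitFiltration_of_mem_L _ l hl)
      (mem_unitFiltration_of_mem_L _ m hm)
  · rintro _ ⟨R, l, hR, _, hRd, hl, rfl⟩
    exact symbol_mem_symbolSubgroup
      (Subgroup.subset_closure (Or.inr ⟨R, hR, Nat.lt_succ_of_le hRd, rfl⟩))
      (mem_unitFiltration_of_mem_L _ l hl)

lemma Fsub'_mono {d e : ℕ} (hde : d ≤ e) :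
    Fsub' k res L O t fR S d ≤ Fsub' k res L O t fR S e :=
  sup_le_sup_left (AddSubgroup.closure_mono fun _ hx => by
    obtain ⟨R, l, h1, h2, h3, h4⟩ := hx
    exact ⟨R, l, h1, h2, h3.trans hde, h4⟩) _

lemma exists_mem_Fsub'_tame_eq (h : IsPointedCurve k F res ord ev L t O fR S)
    (hT : IsTameSymbol ord ev T) {d : ℕ} (hd : d ≤ 3 * t + 1)
    (y : Π₀ P : Pt, Additive ((res P)ˣ)) :
    ∃ x ∈ Fsub' k res L O t fR S d,
      ∀ P, P ∉ S → Module.finrank k (res P) = d → T x P = y P := by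
  obtain ⟨x, hx, hTx⟩ := h.exists_tame_eq_of_finrank_eq hT (Or.inr rfl) hd y
  refine ⟨x, AddSubgroup.mem_sup_right ((AddSubgroup.closure_le _).2 ?_ hx), hTx⟩
  rintro _ ⟨P, l, hP, hPd, hl, rfl⟩
  exact AddSubgroup.subset_closure
    ⟨P, l, hP, h.two_mul_genus_lt hP, hPd.le, by exact_mod_cast hl, rfl⟩

lemma Fsub'_eq (h : IsPointedCurve k F res ord ev L t O fR S) (hT : IsTameSymbol ord ev T)
    {d : ℕ} (hd : 2 * t ≤ d) (hd3 : d ≤ 3 * t) :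
    Fsub' k res L O t fR S d = symbolSubgroup (unitFiltration k res L t O fR S (d + 1)) := by
  refine le_antisymm (Fsub'_le d) ?_
  induction d, hd using Nat.le_induction with
  | base =>
    refine symbolSubgroup_closure_le fun a ha b hb => ?_
    have hgen : ∀ f ∈ ({l | (l : F) ∈ L (Finsupp.single O (3 * t : ℤ))} ∪
        {f | ∃ Q, Q ∉ S ∧ Module.finrank k (res Q) < 2 * t + 1 ∧ f = fR Q} : Set Fˣ),
        (f : F) ∈ L (Finsupp.single O (3 * t : ℤ)) := by
      rintro f (hf | ⟨Q, hQ, hQt, -⟩)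
      · exact hf
      · exact absurd (h.two_mul_genus_lt hQ) (by omega)
    exact AddSubgroup.mem_sup_left
      (AddSubgroup.subset_closure ⟨a, b, hgen a ha, hgen b hb, rfl⟩)
  | succ d hd ih =>
    intro x hx
    obtain ⟨x', hx', hTx'⟩ := h.exists_mem_Fsub'_tame_eq hT (d := d + 1) (by omega) (T x)
    have hsub : x - x' ∈ symbolSubgroup (unitFiltration k res L t O fR S (d + 1)) :=
      h.mem_of_mem_succ hT (AddSubgroup.sub_mem _ hx (Fsub'_le _ hx')) fun P hP hPd => by
        rw [map_sub, DFinsupp.sub_apply, hTx' P hP hPd, sub_self]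
    rw [← sub_add_cancel x x']
    exact AddSubgroup.add_mem _ (Fsub'_mono (Nat.le_succ d) (ih (by omega) hsub)) hx'

end IsPointedCurve

/-- Proposition `RRprop`.  Let `C` be a regular, irreducible curve,
projective over `k`, with function field `F`, arithmetic genus `t ≥ 1` and a
`k`-rational point `O`; let `S = {P : RR_{3t}((P)) ≠ 0}` and let `F'_d` be as in
Definition 4.2(2).  Then for each `d = 2t + 1, …, 3t` the tame symbol induces
isomorphisms `F'_d / F'_{d-1} ≅ ∐_{P ∈ C_d \ S_d} k(P)^*` and
`K₂(F) / F'_{d-1} ≅ ∐_{P ∈ C_{≥d} \ S_{≥d}} k(P)^*`; each isomorphism is expressed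
by the surjectivity of the induced map together with the identification of its
kernel with `F'_{d-1}`. -/
theorem statement19 (k F : Type*) [Field k] [Field F] [Algebra k F]
    {Pt : Type*} (res : Pt → Type*) [∀ P, Field (res P)] [∀ P, Algebra k (res P)]
    (ord : Pt → F → ℤ) (ev : ∀ P, F → res P)
    (L : (Pt →₀ ℤ) → Submodule k F) (t : ℕ) (ht : 1 ≤ t)
    (hC : IsProjCurve k F res ord ev L t)
    (O : Pt) (hO : Module.finrank k (res O) = 1)
    (T : K2 F →+ Π₀ P : Pt, Additive ((res P)ˣ)) (hT : IsTameSymbol ord ev T)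
    (fR : Pt → Fˣ) (DR : Pt → (Pt →₀ ℤ))
    (hfR : ∀ R, R ≠ O → t + 1 ≤ Module.finrank k (res R) →
      (∀ Q, 0 ≤ DR R Q) ∧ divDeg k res (DR R) = t ∧
      ∀ Q, ord Q (fR R : F) =
        ((Finsupp.single R 1 - DR R -
          ((Module.finrank k (res R) : ℤ) - t) • Finsupp.single O 1 : Pt →₀ ℤ)) Q)
    (S : Set Pt)
    (hS : S = {P | L (Finsupp.single O (3 * t : ℤ) - Finsupp.single P 1) ≠ ⊥}) :
    ∀ d : ℕ, 2 * t + 1 ≤ d → d ≤ 3 * t →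
      -- the induced map `F'_d → ∐_{P ∈ C_d \ S_d} k(P)^*` is surjective …
      ((∀ y : Π₀ P : Pt, Additive ((res P)ˣ),
        ∃ x ∈ Fsub' k res L O t fR S d,
          ∀ P, P ∉ S → Module.finrank k (res P) = d → T x P = y P) ∧
      -- … with kernel `F'_{d-1}`:
      (∀ x ∈ Fsub' k res L O t fR S d,
        ((∀ P, P ∉ S → Module.finrank k (res P) = d → T x P = 0) ↔
          x ∈ Fsub' k res L O t fR S (d - 1))) ∧
      -- the induced map `K₂(F) → ∐_{P ∈ C_{≥d} \ S_{≥d}} k(P)^*` is surjective …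
      (∀ y : Π₀ P : Pt, Additive ((res P)ˣ),
        ∃ x : K2 F,
          ∀ P, P ∉ S → d ≤ Module.finrank k (res P) → T x P = y P) ∧
      -- … with kernel `F'_{d-1}`:
      (∀ x : K2 F,
        ((∀ P, P ∉ S → d ≤ Module.finrank k (res P) → T x P = 0) ↔
          x ∈ Fsub' k res L O t fR S (d - 1)))) := by
  have h : IsPointedCurve k F res ord ev L t O fR S :=
    { hC with
      one_le_genus := ht
      finrank_O := hO
      fR_spec := fun R hR hRt => by
        obtain ⟨h1, h2, h3⟩ := hfR R hR hRt
        refine ⟨DR R, h1, h2, fun Q => ?_⟩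
        rw [h3 Q, Finsupp.smul_single, smul_eq_mul, mul_one]
      S_eq := hS }
  intro d hd hd3
  have hprev : Fsub' k res L O t fR S (d - 1) =
      symbolSubgroup (unitFiltration k res L t O fR S d) := by
    rw [h.Fsub'_eq hT (by omega) (by omega), Nat.sub_add_cancel (by omega)]
  refine ⟨fun y => h.exists_mem_Fsub'_tame_eq hT (by omega) y, fun x hx => ?_, fun y => ?_,
    fun x => ?_⟩
  · rw [hprev]
    exact ⟨h.mem_of_mem_succ hT (IsPointedCurve.Fsub'_le d hx),
      fun hx' P hP hPd => h.tame_eq_zero_of_mem hT hx' hP hPd.ge⟩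
  · obtain ⟨x, hx⟩ := h.exists_tame_eq hT y
    exact ⟨x, fun P hP _ => hx P hP⟩
  · rw [hprev, h.mem_symbolSubgroup_iff hT]

end
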